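/- arXiv:1603.02319 — 3 statements merged into one kernel-verified Lean document; each statement's English description precedes it below -/
import Mathlib

section
/- Let f:(ℝ,0)→(ℝ^m,0) be a curve-germ that is not identically zero on any neighbourhood of 0. Then the following are equivalent: (a) f is quasi-homogeneous, i.e. there exist germs of diffeomorphisms ψ:(ℝ,0)→(ℝ,0) and Ψ:(ℝ^m,0)→(ℝ^m,0) and positive integers λ_1,…,λ_m such that the curve-germ g = Ψ∘f∘ψ satisfies t·g'(t) = (λ_1·g_1(t), …, λ_m·g_m(t)) for all t in a neighbourhood of 0; (b) there exist an integer k with 1≤k≤m and positive integers μ_1 < μ_2 < … < μ_k that are linearly independent over non-negative integers, such that f is A-equivalent to the curve-germ t↦(t^{μ_1},…,t^{μ_k},0,…,0). -/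
open Filter Topology

noncomputable section

/-- A curve-germ: a `C^∞` map from a neighbourhood of `0` in `ℝ` to `ℝ^m` sending `0` to `0`. -/
def IsCurveGerm (m : ℕ) (f : ℝ → (Fin m → ℝ)) : Prop :=
  f 0 = 0 ∧ ∃ U ∈ 𝓝 (0 : ℝ), ContDiffOn ℝ (⊤ : ℕ∞) f U

/-- A germ of diffeomorphism of `(ℝ,0)`. -/
def IsDiffeoGerm1 (φ : ℝ → ℝ) : Prop :=
  φ 0 = 0 ∧ (∃ U ∈ 𝓝 (0 : ℝ), ContDiffOn ℝ (⊤ : ℕ∞) φ U) ∧ deriv φ 0 ≠ 0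

/-- A germ of diffeomorphism of `(ℝ^m,0)`. -/
def IsDiffeoGerm (m : ℕ) (Φ : (Fin m → ℝ) → (Fin m → ℝ)) : Prop :=
  Φ 0 = 0 ∧ (∃ U ∈ 𝓝 (0 : Fin m → ℝ), ContDiffOn ℝ (⊤ : ℕ∞) Φ U) ∧
    ∃ D : (Fin m → ℝ) ≃L[ℝ] (Fin m → ℝ),
      HasFDerivAt Φ (D : (Fin m → ℝ) →L[ℝ] (Fin m → ℝ)) 0

/-- `A`-equivalence of curve-germs. -/
def AEquiv (m : ℕ) (f g : ℝ → (Fin m → ℝ)) : Prop :=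
  ∃ φ Φ, IsDiffeoGerm1 φ ∧ IsDiffeoGerm m Φ ∧ ∀ᶠ t in 𝓝 (0 : ℝ), Φ (f t) = g (φ t)

/-- Positive integers `μ 0, …, μ (k-1)` are linearly independent over non-negative
integers: no `μ j` is a `ℕ`-linear combination of the others. -/
def LinIndepNonneg {k : ℕ} (μ : Fin k → ℕ) : Prop :=
  ∀ j : Fin k, ∀ c : Fin k → ℕ, μ j ≠ ∑ i ∈ Finset.univ.erase j, c i * μ i

open scoped ContDiff

/-! Write `g = Ψ ∘ f ∘ ψ`. Differentiating `t • g' = n • g` gives `t • g'' = (n - 1) • g'`, so by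
induction on the weight a smooth solution is `t ^ n • c`; hence the quasi-homogeneous germs are
those `A`-equivalent to some `t ↦ (cᵢ t ^ λᵢ)ᵢ`. Among the `λᵢ` with `cᵢ ≠ 0` choose an irredundant
set of generators `μ` of the monoid they span. Expressing each `λᵢ` through `μ` writes the curve as
`G (t ^ μ₁, …, t ^ μₖ)` with monomial components for `G`. By irredundance each `μⱼ` has only the
trivial expression, so every coordinate occurs linearly in `G`, which is thus an immersion at `0`
and is straightened to the linear inclusion `ℝᵏ → ℝᵐ` by the inverse function theorem. -/

section InverseFunction

section NontriviallyNormedField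

variable {𝕜 E F : Type*} [NontriviallyNormedField 𝕜] [NormedAddCommGroup E] [NormedSpace 𝕜 E]
  [NormedAddCommGroup F] [NormedSpace 𝕜 F] {n : WithTop ℕ∞} {f : E → F} {a : E}

lemma exists_contDiffOn_nhds_iff_eventually_contDiffAt :
    (∃ U ∈ 𝓝 a, ContDiffOn 𝕜 n f U) ↔ ∀ᶠ x in 𝓝 a, ContDiffAt 𝕜 n f x := by
  refine ⟨fun ⟨U, hU, hf⟩ => ?_, fun hf => ⟨_, hf, fun x hx => ContDiffAt.contDiffWithinAt hx⟩⟩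
  filter_upwards [eventually_mem_nhds_iff.2 hU] with x hx using hf.contDiffAt hx

lemma eventually_isInvertible_fderiv [CompleteSpace E] {f' : E ≃L[𝕜] F}
    (hf : ContDiffAt 𝕜 n f a) (hf' : HasFDerivAt f (f' : E →L[𝕜] F) a) (hn : n ≠ 0) :
    ∀ᶠ x in 𝓝 a, (fderiv 𝕜 f x).IsInvertible := by
  have hcont : ContinuousAt (fderiv 𝕜 f) a := hf.continuousAt_fderiv hn
  have hnhds : Set.range ((↑) : (E ≃L[𝕜] F) → E →L[𝕜] F) ∈ 𝓝 (fderiv 𝕜 f a) :=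
    hf'.fderiv ▸ f'.nhds
  exact hcont.eventually_mem hnhds

end NontriviallyNormedField

-- For `n = ∞`, differentiability of all orders at `a` alone gives no common neighbourhood, so both
-- smoothness assertions are made at all nearby points.
theorem exists_contDiffAt_localInverse {𝕜 E F : Type*} [RCLike 𝕜] [NormedAddCommGroup E]
    [NormedSpace 𝕜 E] [CompleteSpace E] [NormedAddCommGroup F] [NormedSpace 𝕜 F]
    {n : WithTop ℕ∞} {f : E → F} {a : E} {f' : E ≃L[𝕜] F}
    (hf : ∀ᶠ x in 𝓝 a, ContDiffAt 𝕜 n f x) (hf' : HasFDerivAt f (f' : E →L[𝕜] F) a)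
    (hn : n ≠ 0) :
    ∃ g : F → E, g (f a) = a ∧ (∀ᶠ y in 𝓝 (f a), ContDiffAt 𝕜 n g y) ∧
      HasFDerivAt g (f'.symm : F →L[𝕜] E) (f a) ∧
      (∀ᶠ x in 𝓝 a, g (f x) = x) ∧ ∀ᶠ y in 𝓝 (f a), f (g y) = y := by
  have hstrict : HasStrictFDerivAt f (f' : E →L[𝕜] F) a :=
    hf.self_of_nhds.hasStrictFDerivAt' hf' hn
  have hsymm : Tendsto (hstrict.localInverse f f' a) (𝓝 (f a)) (𝓝 a) :=
    hstrict.localInverse_tendsto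
  refine ⟨hstrict.localInverse f f' a, hstrict.localInverse_apply_image, ?_,
    hstrict.to_localInverse.hasFDerivAt, hstrict.eventually_left_inverse,
    hstrict.eventually_right_inverse⟩
  let e := hstrict.toOpenPartialHomeomorph f
  filter_upwards [e.open_target.mem_nhds hstrict.image_mem_toOpenPartialHomeomorph_target,
    hsymm.eventually hf, hsymm.eventually
      (eventually_isInvertible_fderiv hf.self_of_nhds hf' hn)] with y hy hfy ⟨f'y, hf'y⟩
  refine e.contDiffAt_symm (f₀' := f'y) hy ?_ hfy
  rw [hf'y]
  exact (hfy.differentiableAt hn).hasFDerivAt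

end InverseFunction

section EulerEquation

variable {𝕜 F : Type*} [RCLike 𝕜] [NormedAddCommGroup F] [NormedSpace 𝕜 F] {g : 𝕜 → F} {n : ℕ}

lemma eventuallyEq_const_of_smul_deriv_eq_zero (hg : ContDiffAt 𝕜 1 g 0)
    (heuler : ∀ᶠ t in 𝓝 0, t • deriv g t = 0) : g =ᶠ[𝓝 0] fun _ => g 0 := by
  have hcont : ContinuousAt (deriv g) 0 :=
    (hg.derivWithin (m := 0) (by simp)).continuousAt
  have hderiv : deriv g =ᶠ[𝓝 0] 0 := by
    refine (hcont.eventuallyEq_nhds_iff_eventuallyEq_nhdsNE continuousAt_const).1 ?_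
    filter_upwards [heuler.filter_mono nhdsWithin_le_nhds, self_mem_nhdsWithin] with t ht hne
    exact (smul_eq_zero.1 ht).resolve_left hne
  obtain ⟨ε, hε, hball⟩ := Metric.eventually_nhds_iff_ball.1
    (hderiv.and (hg.eventually (by simp)))
  filter_upwards [Metric.ball_mem_nhds 0 hε] with t ht
  let : NormedSpace ℝ 𝕜 := inferInstance
  exact Metric.isOpen_ball.is_const_of_deriv_eq_zero (Metric.isConnected_ball hε).isPreconnected
    (fun s hs => ((hball s hs).2.differentiableAt (by simp)).differentiableWithinAt)
    (fun s hs => (hball s hs).1) ht (Metric.mem_ball_self hε)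

lemma eventually_smul_deriv_deriv_eq (hg : ContDiffAt 𝕜 2 g 0)
    (heuler : ∀ᶠ t in 𝓝 0, t • deriv g t = ((n + 1 : ℕ) : 𝕜) • g t) :
    ∀ᶠ t in 𝓝 0, t • deriv (deriv g) t = (n : 𝕜) • deriv g t := by
  filter_upwards [heuler.eventually_nhds, hg.eventually (by simp)] with t ht hgt
  have hleft : HasDerivAt (fun s => s • deriv g s)
      (t • deriv (deriv g) t + (1 : 𝕜) • deriv g t) t :=
    (hasDerivAt_id' t).smul ((hgt.derivWithin (m := 1) (by norm_num)).differentiableAt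
      one_ne_zero).hasDerivAt
  have hright : HasDerivAt (fun s => s • deriv g s) (((n + 1 : ℕ) : 𝕜) • deriv g t) t :=
    (((hgt.differentiableAt (by simp)).hasDerivAt).const_smul _).congr_of_eventuallyEq ht
  simpa [add_smul] using hleft.unique hright

theorem exists_eventuallyEq_pow_smul (hg : ContDiffAt 𝕜 (n + 1) g 0)
    (heuler : ∀ᶠ t in 𝓝 0, t • deriv g t = (n : 𝕜) • g t) :
    ∃ c : F, g =ᶠ[𝓝 0] fun t => t ^ n • c := by
  induction n generalizing g with
  | zero =>
    simp only [Nat.cast_zero, zero_add, zero_smul, pow_zero, one_smul] at *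
    exact ⟨g 0, eventuallyEq_const_of_smul_deriv_eq_zero hg heuler⟩
  | succ n ih =>
    have hg2 : ContDiffAt 𝕜 2 g 0 := hg.of_le (by norm_cast; omega)
    obtain ⟨c, hc⟩ := ih (hg.derivWithin (by norm_cast)) (eventually_smul_deriv_deriv_eq hg2 heuler)
    refine ⟨((n + 1 : ℕ) : 𝕜)⁻¹ • c, ?_⟩
    filter_upwards [hc, heuler] with t hct ht
    rw [smul_comm, pow_succ', mul_smul, ← hct, ht,
      inv_smul_smul₀ (Nat.cast_ne_zero.2 n.succ_ne_zero)]

end EulerEquation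

section Generators

variable {R M : Type*} [Semiring R] [AddCommMonoid M] [Module R M]

lemma exists_subset_span_eq_forall_notMem_span_diff (S : Finset M) :
    ∃ T ⊆ S, Submodule.span R (T : Set M) = Submodule.span R S ∧
      ∀ x ∈ T, x ∉ Submodule.span R (T \ {x} : Set M) := by
  classical
  obtain ⟨T, -, ⟨hTS, hT⟩, hmin⟩ := exists_minimal_le_of_wellFoundedLT
    (fun T : Finset M => T ⊆ S ∧ Submodule.span R (T : Set M) = Submodule.span R S) S
    ⟨subset_rfl, rfl⟩
  refine ⟨T, hTS, hT, fun x hx hspan => ?_⟩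
  have herase : Submodule.span R (T.erase x : Set M) = Submodule.span R S := by
    rw [Finset.coe_erase, ← Submodule.span_insert_eq_span hspan, Set.insert_sdiff_singleton,
      Set.insert_eq_of_mem hx, hT]
  exact Finset.notMem_erase x T
    (hmin ⟨(T.erase_subset x).trans hTS, herase⟩ (T.erase_subset x) hx)

lemma LinIndepNonneg.pos {k : ℕ} {μ : Fin k → ℕ} (hμ : LinIndepNonneg μ) (j : Fin k) : 0 < μ j :=
  Nat.pos_of_ne_zero fun h => hμ j 0 (by simp [h])

lemma linIndepNonneg_of_notMem_span {k : ℕ} {μ : Fin k → ℕ}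
    (hμ : ∀ j, μ j ∉ Submodule.span ℕ (μ '' {j}ᶜ)) : LinIndepNonneg μ := by
  intro j c hj
  refine hμ j (hj ▸ Submodule.sum_mem _ fun i hi => ?_)
  exact Submodule.smul_mem _ (c i)
    (Submodule.subset_span (Set.mem_image_of_mem μ (Finset.ne_of_mem_erase hi)))

theorem exists_strictMono_linIndepNonneg_span_eq (S : Finset ℕ) :
    ∃ (k : ℕ) (μ : Fin k → ℕ), StrictMono μ ∧ LinIndepNonneg μ ∧ (∀ j, μ j ∈ S) ∧
      Submodule.span ℕ (Set.range μ) = Submodule.span ℕ S := by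
  obtain ⟨T, hTS, hT, hmin⟩ := exists_subset_span_eq_forall_notMem_span_diff (R := ℕ) S
  let μ := T.orderEmbOfFin rfl
  have hrange : Set.range μ = T := T.range_orderEmbOfFin rfl
  have hmem : ∀ j, μ j ∈ T := T.orderEmbOfFin_mem rfl
  refine ⟨T.card, μ, μ.strictMono, linIndepNonneg_of_notMem_span fun j => ?_,
    fun j => hTS (hmem j), by rw [hrange, hT]⟩
  rw [Set.image_compl_eq_range_sdiff_image μ.injective, hrange, Set.image_singleton]
  exact hmin _ (hmem j)

end Generators

section Germs

variable {m : ℕ}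

lemma IsCurveGerm.contDiffAt {f : ℝ → Fin m → ℝ} (hf : IsCurveGerm m f) :
    ContDiffAt ℝ ∞ f 0 :=
  (exists_contDiffOn_nhds_iff_eventually_contDiffAt.1 hf.2).self_of_nhds

lemma IsCurveGerm.tendsto {f : ℝ → Fin m → ℝ} (hf : IsCurveGerm m f) :
    Tendsto f (𝓝 0) (𝓝 0) :=
  hf.1 ▸ hf.contDiffAt.continuousAt.tendsto

namespace IsDiffeoGerm1

variable {φ : ℝ → ℝ}

lemma contDiffAt (hφ : IsDiffeoGerm1 φ) : ContDiffAt ℝ ∞ φ 0 :=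
  (exists_contDiffOn_nhds_iff_eventually_contDiffAt.1 hφ.2.1).self_of_nhds

lemma tendsto (hφ : IsDiffeoGerm1 φ) : Tendsto φ (𝓝 0) (𝓝 0) := by
  simpa only [hφ.1] using hφ.contDiffAt.continuousAt.tendsto

lemma exists_rightInverse (hφ : IsDiffeoGerm1 φ) :
    ∃ ψ, IsDiffeoGerm1 ψ ∧ ∀ᶠ t in 𝓝 0, φ (ψ t) = t := by
  have ⟨hφ0, hφsmooth, hφ'⟩ := hφ
  have hderiv : HasDerivAt φ (deriv φ 0) 0 :=
    (hφ.contDiffAt.differentiableAt (by simp)).hasDerivAt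
  obtain ⟨ψ, hψ0, hψsmooth, hψ', -, hright⟩ := exists_contDiffAt_localInverse
    (exists_contDiffOn_nhds_iff_eventually_contDiffAt.1 hφsmooth)
    (hderiv.hasFDerivAt_equiv hφ') (by simp)
  rw [hφ0] at hψ0 hψsmooth hψ' hright
  refine ⟨ψ, ⟨hψ0, exists_contDiffOn_nhds_iff_eventually_contDiffAt.2 hψsmooth, ?_⟩, hright⟩
  rw [hψ'.hasDerivAt.deriv]
  exact (map_ne_zero_iff _ (ContinuousLinearEquiv.injective _)).2 one_ne_zero

end IsDiffeoGerm1

namespace IsDiffeoGerm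

variable {Φ Ψ : (Fin m → ℝ) → Fin m → ℝ}

lemma eventually_contDiffAt (hΦ : IsDiffeoGerm m Φ) : ∀ᶠ x in 𝓝 0, ContDiffAt ℝ ∞ Φ x :=
  exists_contDiffOn_nhds_iff_eventually_contDiffAt.1 hΦ.2.1

lemma tendsto (hΦ : IsDiffeoGerm m Φ) : Tendsto Φ (𝓝 0) (𝓝 0) := by
  simpa only [hΦ.1] using hΦ.eventually_contDiffAt.self_of_nhds.continuousAt.tendsto

lemma comp (hΦ : IsDiffeoGerm m Φ) (hΨ : IsDiffeoGerm m Ψ) : IsDiffeoGerm m (Φ ∘ Ψ) := by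
  have ⟨hΦ0, _, D, hD⟩ := hΦ
  have ⟨hΨ0, _, D', hD'⟩ := hΨ
  refine ⟨by simp [hΦ0, hΨ0], exists_contDiffOn_nhds_iff_eventually_contDiffAt.2 ?_, D'.trans D,
    HasFDerivAt.comp 0 (hΨ0.symm ▸ hD) hD'⟩
  filter_upwards [hΨ.eventually_contDiffAt, hΨ.tendsto.eventually hΦ.eventually_contDiffAt]
    with x hΨx hΦx using hΦx.comp x hΨx

lemma exists_leftInverse (hΦ : IsDiffeoGerm m Φ) :
    ∃ Ψ, IsDiffeoGerm m Ψ ∧ ∀ᶠ x in 𝓝 0, Ψ (Φ x) = x := by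
  have ⟨hΦ0, _, D, hD⟩ := hΦ
  obtain ⟨Ψ, hΨ0, hΨsmooth, hΨ', hleft, -⟩ :=
    exists_contDiffAt_localInverse hΦ.eventually_contDiffAt hD (by simp)
  rw [hΦ0] at hΨ0 hΨsmooth hΨ'
  exact ⟨Ψ, ⟨hΨ0, exists_contDiffOn_nhds_iff_eventually_contDiffAt.2 hΨsmooth, D.symm, hΨ'⟩, hleft⟩

end IsDiffeoGerm

variable {f g h : ℝ → Fin m → ℝ}

lemma aEquiv_iff_exists_comp_eq : AEquiv m f g ↔ ∃ ψ Φ, IsDiffeoGerm1 ψ ∧ IsDiffeoGerm m Φ ∧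
    ∀ᶠ t in 𝓝 0, Φ (f (ψ t)) = g t := by
  constructor
  · rintro ⟨φ, Φ, hφ, hΦ, heq⟩
    obtain ⟨ψ, hψ, hright⟩ := hφ.exists_rightInverse
    refine ⟨ψ, Φ, hψ, hΦ, ?_⟩
    filter_upwards [hψ.tendsto.eventually heq, hright] with t ht hφψ
    rw [ht, hφψ]
  · rintro ⟨ψ, Φ, hψ, hΦ, heq⟩
    obtain ⟨φ, hφ, hright⟩ := hψ.exists_rightInverse
    refine ⟨φ, Φ, hφ, hΦ, ?_⟩
    filter_upwards [hφ.tendsto.eventually heq, hright] with t ht hψφ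
    rw [← ht, hψφ]

namespace AEquiv

lemma comp_left {Θ : (Fin m → ℝ) → Fin m → ℝ} (hfg : AEquiv m f g) (hΘ : IsDiffeoGerm m Θ)
    (hgh : ∀ᶠ t in 𝓝 0, Θ (g t) = h t) : AEquiv m f h := by
  obtain ⟨φ, Φ, hφ, hΦ, heq⟩ := hfg
  refine ⟨φ, Θ ∘ Φ, hφ, hΘ.comp hΦ, ?_⟩
  filter_upwards [heq, hφ.tendsto.eventually hgh] with t ht hφt
  rw [Function.comp_apply, ht, hφt]

lemma eventually_eq_zero (hf : IsCurveGerm m f) (hf0 : AEquiv m f 0) : ∀ᶠ t in 𝓝 0, f t = 0 := by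
  obtain ⟨φ, Φ, -, hΦ, heq⟩ := hf0
  obtain ⟨Ψ, hΨ, hleft⟩ := hΦ.exists_leftInverse
  filter_upwards [heq, hf.tendsto.eventually hleft] with t ht hΨΦ
  rw [← hΨΦ, ht, Pi.zero_apply, hΨ.1]

end AEquiv

lemma exists_linearEquiv_comp_eq {K V W : Type*} [Field K] [AddCommGroup V] [Module K V]
    [FiniteDimensional K V] [AddCommGroup W] [Module K W] {A B : V →ₗ[K] W}
    (hA : Function.Injective A) (hB : Function.Injective B) :
    ∃ D : W ≃ₗ[K] W, D ∘ₗ B = A := by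
  obtain ⟨D, hD⟩ := Submodule.exists_linearEquiv_restrict_eq
    ((LinearEquiv.ofInjective B hB).symm.trans (LinearEquiv.ofInjective A hA))
  refine ⟨D, LinearMap.ext fun x => ?_⟩
  simpa using (hD (LinearEquiv.ofInjective B hB x)).symm

theorem exists_isDiffeoGerm_comp_eq_linearMap {V : Type*} [NormedAddCommGroup V] [NormedSpace ℝ V]
    [FiniteDimensional ℝ V] {G : V → Fin m → ℝ} {A B : V →L[ℝ] Fin m → ℝ}
    (hG0 : G 0 = 0) (hG : ∀ᶠ x in 𝓝 0, ContDiffAt ℝ ∞ G x) (hGA : HasFDerivAt G A 0)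
    (hA : Function.Injective A) (hB : Function.Injective B) :
    ∃ Φ, IsDiffeoGerm m Φ ∧ ∀ᶠ x in 𝓝 0, Φ (G x) = B x := by
  obtain ⟨D, hD⟩ := exists_linearEquiv_comp_eq hA hB
  obtain ⟨P, hP⟩ := B.toLinearMap.exists_leftInverse_of_injective (LinearMap.ker_eq_bot.2 hB)
  have hDB : ∀ x, D (B x) = A x := LinearMap.congr_fun hD
  have hPB : ∀ x, P (B x) = x := LinearMap.congr_fun hP
  let L := D.toContinuousLinearEquiv
  let p := LinearMap.toContinuousLinearMap P
  -- The linear correction makes `D` the derivative of `Ψ` and vanishes on the range of `B`.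
  let Ψ : (Fin m → ℝ) → Fin m → ℝ := fun y => G (p y) + L (y - B (p y))
  have hp : Tendsto p (𝓝 0) (𝓝 0) := by simpa using p.continuous.tendsto 0
  have hΨB : ∀ x, Ψ (B x) = G x := by simp [Ψ, p, hPB]
  have hderiv : HasFDerivAt Ψ (L : (Fin m → ℝ) →L[ℝ] Fin m → ℝ) 0 := by
    have hGp : HasFDerivAt (G ∘ p) (A ∘L p) 0 :=
      HasFDerivAt.comp 0 (by rwa [map_zero]) p.hasFDerivAt
    have hsum := hGp.add (L.hasFDerivAt.comp 0
      ((hasFDerivAt_id 0).sub (B.hasFDerivAt.comp 0 p.hasFDerivAt)))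
    refine hsum.congr_fderiv (ContinuousLinearMap.ext fun y => ?_)
    simp [L, hDB]
  have hΨ : IsDiffeoGerm m Ψ := by
    refine ⟨by simp [Ψ, hG0], exists_contDiffOn_nhds_iff_eventually_contDiffAt.2 ?_, L, hderiv⟩
    filter_upwards [hp.eventually hG] with y hy
    exact (hy.comp y p.contDiff.contDiffAt).add
      (L.contDiff.comp (contDiff_id.sub (B.contDiff.comp p.contDiff))).contDiffAt
  obtain ⟨Φ, hΦ, hleft⟩ := hΨ.exists_leftInverse
  refine ⟨Φ, hΦ, ?_⟩
  have hBtendsto : Tendsto B (𝓝 0) (𝓝 0) := by simpa using B.continuous.tendsto 0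
  filter_upwards [hBtendsto.eventually hleft] with x hx
  rw [← hΨB, hx]

end Germs

section EulerCurve

variable {𝕜 ι : Type*}

lemma exists_eventually_eq_mul_pow [RCLike 𝕜] [Fintype ι] {lam : ι → ℕ} {g : 𝕜 → ι → 𝕜}
    (hg : ContDiffAt 𝕜 ∞ g 0)
    (heuler : ∀ᶠ t in 𝓝 0, t • deriv g t = fun i => (lam i : 𝕜) * g t i) :
    ∃ c : ι → 𝕜, ∀ᶠ t in 𝓝 0, g t = fun i => c i * t ^ lam i := by
  have hcoord : ∀ i, ∃ c : 𝕜, ∀ᶠ t in 𝓝 0, g t i = c * t ^ lam i := by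
    intro i
    have hgi : ContDiffAt 𝕜 ∞ (fun t => g t i) 0 := contDiffAt_pi.1 hg i
    obtain ⟨c, hc⟩ := exists_eventuallyEq_pow_smul (n := lam i)
      (hgi.of_le (by exact_mod_cast le_top)) (by
        filter_upwards [heuler, (hg.of_le (m := 1) (by simp)).eventually (by simp)] with t ht hgt
        rw [deriv_pi fun i => differentiableAt_pi.1 (hgt.differentiableAt (by simp)) i] at ht
        exact congrFun ht i)
    exact ⟨c, hc.mono fun t ht => ht.trans (mul_comm _ _)⟩
  choose c hc using hcoord
  exact ⟨c, (eventually_all.2 hc).mono fun t ht => funext ht⟩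

lemma smul_deriv_mul_pow [NontriviallyNormedField 𝕜] [Finite ι] (c : ι → 𝕜) (lam : ι → ℕ)
    (t : 𝕜) :
    t • deriv (fun s i => c i * s ^ lam i) t = fun i => (lam i : 𝕜) * (c i * t ^ lam i) := by
  cases nonempty_fintype ι
  have hderiv : HasDerivAt (fun s i => c i * s ^ lam i)
      (fun i => c i * (lam i * t ^ (lam i - 1))) t :=
    hasDerivAt_pi.2 fun i => (hasDerivAt_pow (lam i) t).const_mul (c i)
  ext i
  rw [hderiv.deriv, Pi.smul_apply, smul_eq_mul]
  rcases Nat.eq_zero_or_pos (lam i) with hi | hi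
  · simp [hi]
  · rw [← mul_pow_sub_one hi.ne' t]
    ring

end EulerCurve

section MonomialMap

variable {𝕜 σ τ : Type*} [NontriviallyNormedField 𝕜] [Fintype σ]

/-- The map with components the monomials `c i * ∏ j, x j ^ a i j`. It expresses the curve
`t ↦ (c i * t ^ λ i)` through `t ↦ (t ^ μ j)` when row `i` of the exponent matrix `a` writes `λ i`
as a combination of the `μ j`. -/
def monomialMap (c : τ → 𝕜) (a : τ → σ → ℕ) (x : σ → 𝕜) : τ → 𝕜 :=
  fun i => c i * ∏ j, x j ^ a i j

variable {c : τ → 𝕜} {a : τ → σ → ℕ}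

lemma contDiff_monomialMap [Fintype τ] : ContDiff 𝕜 ∞ (monomialMap c a) := by
  unfold monomialMap
  fun_prop

lemma monomialMap_zero (ha : ∀ i, c i ≠ 0 → a i ≠ 0) : monomialMap c a 0 = 0 := by
  ext i
  by_cases hi : c i = 0
  · simp [monomialMap, hi]
  · obtain ⟨j, hj⟩ := Function.ne_iff.1 (ha i hi)
    exact mul_eq_zero_of_right _ (Finset.prod_eq_zero (Finset.mem_univ j) (zero_pow hj))

lemma monomialMap_pow (t : 𝕜) (μ : σ → ℕ) :
    monomialMap c a (fun j => t ^ μ j) = fun i => c i * t ^ ∑ j, a i j * μ j := by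
  ext i
  simp only [monomialMap, ← pow_mul', Finset.prod_pow_eq_pow_sum]

lemma injective_of_hasFDerivAt_monomialMap [Finite τ] [DecidableEq σ] {ι : σ → τ} {x : σ → 𝕜}
    {A : (σ → 𝕜) →L[𝕜] τ → 𝕜} (hA : HasFDerivAt (monomialMap c a) A x) (hc : ∀ j, c (ι j) ≠ 0)
    (ha : ∀ j, a (ι j) = Pi.single j 1) : Function.Injective A := by
  cases nonempty_fintype τ
  have hcoord : ∀ j v, A v (ι j) = c (ι j) * v j := by
    intro j v
    have hlinear : (fun x => monomialMap c a x (ι j)) = fun x => c (ι j) * x j := by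
      funext x
      simp [monomialMap, ha, Pi.single_apply, pow_ite]
    have hAj := hasFDerivAt_pi'.1 hA (ι j)
    rw [hlinear] at hAj
    exact DFunLike.congr_fun (hAj.unique ((hasFDerivAt_apply j x).const_mul _)) v
  intro v w hvw
  ext j
  have hj := congrFun hvw (ι j)
  rwa [hcoord, hcoord, mul_right_inj' (hc j)] at hj

end MonomialMap

section NormalForm

variable {m k : ℕ}

/-- The standard linear inclusion `ℝ^k → ℝ^m` appending zeros (a truncation if `m < k`), so that
`zeroPad m (t ^ μ)` is the monomial curve `(t ^ μ₁, …, t ^ μₖ, 0, …, 0)`. -/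
def zeroPad (m : ℕ) {k : ℕ} : (Fin k → ℝ) →L[ℝ] Fin m → ℝ :=
  ContinuousLinearMap.pi fun i => if h : (i : ℕ) < k then .proj ⟨i, h⟩ else 0

lemma zeroPad_apply (x : Fin k → ℝ) :
    zeroPad m x = fun i : Fin m => if h : (i : ℕ) < k then x ⟨i, h⟩ else 0 := by
  ext i
  by_cases h : (i : ℕ) < k <;> simp [zeroPad, h]

lemma zeroPad_injective (hkm : k ≤ m) : Function.Injective (zeroPad m (k := k)) := by
  intro x y hxy
  ext j
  simpa [zeroPad_apply] using congrFun hxy (Fin.castLE hkm j)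

lemma LinIndepNonneg.eq_single {μ a : Fin k → ℕ} (hμ : LinIndepNonneg μ) {j : Fin k}
    (hsum : ∑ i, a i * μ i = μ j) : a = Pi.single j 1 := by
  rw [← Finset.add_sum_erase _ _ (Finset.mem_univ j)] at hsum
  have haj : a j ≠ 0 := fun h => hμ j a (by simpa [h] using hsum.symm)
  have hle : μ j ≤ a j * μ j := Nat.le_mul_of_pos_left _ (Nat.pos_of_ne_zero haj)
  have hrest : ∑ i ∈ Finset.univ.erase j, a i * μ i = 0 := by omega
  ext i
  rcases eq_or_ne i j with rfl | hij
  · rw [Pi.single_eq_same]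
    exact Nat.eq_of_mul_eq_mul_right (hμ.pos i) (by omega)
  · rw [Pi.single_eq_of_ne hij]
    have hi := Finset.sum_eq_zero_iff.1 hrest i (Finset.mem_erase.2 ⟨hij, Finset.mem_univ i⟩)
    exact (Nat.mul_eq_zero.1 hi).resolve_right (hμ.pos i).ne'

variable {c : Fin m → ℝ} {lam : Fin m → ℕ}

lemma exists_isDiffeoGerm_comp_eq_zeroPad_pow (hkm : k ≤ m) {μ : Fin k → ℕ}
    (hμ : LinIndepNonneg μ) (hlam : ∀ i, c i ≠ 0 → 0 < lam i)
    (hgen : ∀ j, ∃ i, c i ≠ 0 ∧ lam i = μ j)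
    (hspan : ∀ i, c i ≠ 0 → lam i ∈ Submodule.span ℕ (Set.range μ)) :
    ∃ Φ, IsDiffeoGerm m Φ ∧
      ∀ᶠ t in 𝓝 (0 : ℝ), Φ (fun i => c i * t ^ lam i) = zeroPad m fun j => t ^ μ j := by
  have hexp : ∀ i, ∃ a : Fin k → ℕ, c i ≠ 0 → ∑ j, a j * μ j = lam i := by
    intro i
    by_cases hi : c i = 0
    · exact ⟨0, fun h => absurd hi h⟩
    · obtain ⟨a, ha⟩ := Submodule.mem_span_range_iff_exists_fun ℕ |>.1 (hspan i hi)
      exact ⟨a, fun _ => ha⟩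
  choose a ha using hexp
  choose ι hcι hι using hgen
  have hG0 : monomialMap c a 0 = 0 := by
    refine monomialMap_zero fun i hi hai => (hlam i hi).ne ?_
    simp [← ha i hi, hai]
  have hG' := (contDiff_monomialMap (c := c) (a := a)).differentiable (by simp) 0 |>.hasFDerivAt
  have hinj := injective_of_hasFDerivAt_monomialMap hG' hcι
    fun j => hμ.eq_single ((ha _ (hcι j)).trans (hι j))
  obtain ⟨Φ, hΦ, hstraight⟩ := exists_isDiffeoGerm_comp_eq_linearMap hG0
    (.of_forall fun x => contDiff_monomialMap.contDiffAt) hG' hinj (zeroPad_injective hkm)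
  have hpow : Tendsto (fun (t : ℝ) j => t ^ μ j) (𝓝 0) (𝓝 0) := by
    refine tendsto_pi_nhds.2 fun j => ?_
    simpa [(hμ.pos j).ne'] using (continuous_pow (M := ℝ) (μ j)).tendsto 0
  refine ⟨Φ, hΦ, (hpow.eventually hstraight).mono fun t ht => ?_⟩
  rw [← ht, monomialMap_pow]
  congr 1
  ext i
  by_cases hi : c i = 0
  · simp [hi]
  · rw [ha i hi]

theorem exists_monomial_normalForm (hc : c ≠ 0) (hlam : ∀ i, c i ≠ 0 → 0 < lam i) :
    ∃ k, 1 ≤ k ∧ k ≤ m ∧ ∃ μ : Fin k → ℕ, StrictMono μ ∧ LinIndepNonneg μ ∧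
      ∃ Φ, IsDiffeoGerm m Φ ∧
        ∀ᶠ t in 𝓝 (0 : ℝ), Φ (fun i => c i * t ^ lam i) = zeroPad m fun j => t ^ μ j := by
  let S : Finset ℕ := (Finset.univ.filter fun i => c i ≠ 0).image lam
  have hS : ∀ {s}, s ∈ S ↔ ∃ i, c i ≠ 0 ∧ lam i = s := by simp [S]
  obtain ⟨k, μ, hμ, hindep, hμS, hspan⟩ := exists_strictMono_linIndepNonneg_span_eq S
  have hgen : ∀ j, ∃ i, c i ≠ 0 ∧ lam i = μ j := fun j => hS.1 (hμS j)
  have hlamspan : ∀ i, c i ≠ 0 → lam i ∈ Submodule.span ℕ (Set.range μ) := fun i hi =>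
    hspan ▸ Submodule.subset_span (hS.2 ⟨i, hi, rfl⟩)
  have hk : 1 ≤ k := by
    obtain ⟨i, hi⟩ := Function.ne_iff.1 hc
    refine Nat.one_le_iff_ne_zero.2 ?_
    rintro rfl
    have hi0 : lam i = 0 := by simpa using hlamspan i hi
    exact (hlam i hi).ne' hi0
  have hkm : k ≤ m := by
    choose ι _ hι using hgen
    have hinj : Function.Injective (lam ∘ ι) := (funext hι : lam ∘ ι = μ) ▸ hμ.injective
    simpa using Fintype.card_le_of_injective ι hinj.of_comp
  exact ⟨k, hk, hkm, μ, hμ, hindep,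
    exists_isDiffeoGerm_comp_eq_zeroPad_pow hkm hindep hlam hgen hlamspan⟩

lemma exists_zeroPad_pow_eq_mul_pow (m : ℕ) {μ : Fin k → ℕ} (hμ : ∀ j, 0 < μ j) :
    ∃ (c : Fin m → ℝ) (lam : Fin m → ℕ), (∀ i, 0 < lam i) ∧
      (fun t : ℝ => zeroPad m fun j => t ^ μ j) = fun t i => c i * t ^ lam i := by
  refine ⟨fun i => if (i : ℕ) < k then 1 else 0,
    fun i => if h : (i : ℕ) < k then μ ⟨i, h⟩ else 1, fun i => ?_, ?_⟩
  · by_cases h : (i : ℕ) < k <;> simp [h, hμ]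
  · ext t i
    by_cases h : (i : ℕ) < k <;> simp [zeroPad_apply, h]

end NormalForm

section QuasiHomogeneous

variable {m : ℕ} {f : ℝ → Fin m → ℝ}

lemma IsCurveGerm.contDiffAt_comp_comp {ψ : ℝ → ℝ} {Ψ : (Fin m → ℝ) → Fin m → ℝ}
    (hf : IsCurveGerm m f) (hψ : IsDiffeoGerm1 ψ) (hΨ : IsDiffeoGerm m Ψ) :
    ContDiffAt ℝ ∞ (fun t => Ψ (f (ψ t))) 0 := by
  have hfψ : ContDiffAt ℝ ∞ (f ∘ ψ) 0 :=
    ContDiffAt.comp 0 (by simpa only [hψ.1] using hf.contDiffAt) hψ.contDiffAt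
  refine ContDiffAt.comp (g := Ψ) 0 ?_ hfψ
  simpa only [Function.comp_apply, hψ.1, hf.1] using hΨ.eventually_contDiffAt.self_of_nhds

theorem quasiHomogeneous_iff_exists_aEquiv_mul_pow (hf : IsCurveGerm m f) :
    (∃ (ψ : ℝ → ℝ) (Ψ : (Fin m → ℝ) → (Fin m → ℝ)) (lam : Fin m → ℕ),
        IsDiffeoGerm1 ψ ∧ IsDiffeoGerm m Ψ ∧ (∀ i, 0 < lam i) ∧
        ∀ᶠ t in 𝓝 (0 : ℝ),
          t • deriv (fun s => Ψ (f (ψ s))) t = fun i => (lam i : ℝ) * Ψ (f (ψ t)) i) ↔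
    ∃ (c : Fin m → ℝ) (lam : Fin m → ℕ), (∀ i, 0 < lam i) ∧
      AEquiv m f fun t i => c i * t ^ lam i := by
  constructor
  · rintro ⟨ψ, Ψ, lam, hψ, hΨ, hlam, heuler⟩
    obtain ⟨c, hc⟩ := exists_eventually_eq_mul_pow (hf.contDiffAt_comp_comp hψ hΨ) heuler
    exact ⟨c, lam, hlam, aEquiv_iff_exists_comp_eq.2 ⟨ψ, Ψ, hψ, hΨ, hc⟩⟩
  · rintro ⟨c, lam, hlam, hfc⟩
    obtain ⟨ψ, Ψ, hψ, hΨ, heq⟩ := aEquiv_iff_exists_comp_eq.1 hfc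
    refine ⟨ψ, Ψ, lam, hψ, hΨ, hlam, ?_⟩
    filter_upwards [heq, EventuallyEq.deriv heq] with t ht ht'
    rw [ht', ht, smul_deriv_mul_pow]

end QuasiHomogeneous

/-- A non-trivial curve-germ is quasi-homogeneous (i.e. in suitable coordinates it
satisfies `t·g'(t) = E ∘ g` for an Euler vector field with positive integer weights)
if and only if it is `A`-equivalent to a monomial curve
`t ↦ (t^{μ₁},…,t^{μ_k},0,…,0)` with `μ₁ < … < μ_k` linearly independent over
non-negative integers. -/
theorem quasiHomogeneous_iff_monomial (m : ℕ) (f : ℝ → (Fin m → ℝ))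
    (hf : IsCurveGerm m f) (hne : ¬ ∀ᶠ t in 𝓝 (0 : ℝ), f t = 0) :
    (∃ (ψ : ℝ → ℝ) (Ψ : (Fin m → ℝ) → (Fin m → ℝ)) (lam : Fin m → ℕ),
        IsDiffeoGerm1 ψ ∧ IsDiffeoGerm m Ψ ∧ (∀ i, 0 < lam i) ∧
        ∀ᶠ t in 𝓝 (0 : ℝ),
          t • deriv (fun s => Ψ (f (ψ s))) t = fun i => (lam i : ℝ) * Ψ (f (ψ t)) i) ↔
    (∃ k : ℕ, 1 ≤ k ∧ k ≤ m ∧ ∃ μ : Fin k → ℕ,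
        StrictMono μ ∧ (∀ i, 0 < μ i) ∧ LinIndepNonneg μ ∧
        AEquiv m f (fun t i => if h : (i : ℕ) < k then t ^ μ ⟨i, h⟩ else 0)) := by
  rw [quasiHomogeneous_iff_exists_aEquiv_mul_pow hf]
  constructor
  · rintro ⟨c, lam, hlam, hfc⟩
    have hc : c ≠ 0 := by
      rintro rfl
      simp only [Pi.zero_apply, zero_mul] at hfc
      exact hne (AEquiv.eventually_eq_zero hf hfc)
    obtain ⟨k, hk, hkm, μ, hμ, hindep, Φ, hΦ, hΦc⟩ :=
      exists_monomial_normalForm hc fun i _ => hlam i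
    simp only [zeroPad_apply] at hΦc
    exact ⟨k, hk, hkm, μ, hμ, hindep.pos, hindep, hfc.comp_left hΦ hΦc⟩
  · rintro ⟨k, -, -, μ, -, hμ, -, hfμ⟩
    obtain ⟨c, lam, hlam, hμc⟩ := exists_zeroPad_pow_eq_mul_pow m hμ
    simp only [zeroPad_apply] at hμc
    exact ⟨c, lam, hlam, hμc ▸ hfμ⟩
end
end

section
/- Let λ_1,…,λ_m be positive integers, δ a real number, and h a C^∞ real-valued function on a neighbourhood U of 0 in ℝ^m such that h(t^{λ_1}·x_1,…,t^{λ_m}·x_m) = t^δ·h(x_1,…,x_m) for all t∈(0,1] and all x∈U for which the scaled point (t^{λ_1}x_1,…,t^{λ_m}x_m) also lies in U. Then either h vanishes identically on a neighbourhood of 0, or δ is a non-negative integer and there exists a polynomial P∈ℝ[x_1,…,x_m] that is weighted homogeneous of weighted degree δ with respect to the weights (λ_1,…,λ_m) (i.e. every monomial x^α occurring in P satisfies Σ_i α_i·λ_i = δ) such that h(x) = P(x) for all x in a neighbourhood of 0. -/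
open Filter Topology

noncomputable section

/-!
By Taylor's theorem, `h = Q + o(‖x‖ ^ k)` near `0` for some polynomial `Q`. Along the orbit
`t ↦ (t ^ λᵢ * xᵢ)` of a fixed point `x`, the function `h` equals `t ^ δ * h x`, while `Q` equals
`∑ s, t ^ s * Q_s x`, where `Q_s` is its weighted homogeneous component of degree `s`, and the
remainder is `o(t ^ δ)` as `t → 0⁺` as soon as `δ ≤ k * min λᵢ`. Powers of `t` with distinct
exponents at most `δ` are linearly independent modulo `o(t ^ δ)`, so comparing the coefficients of
`t ^ δ` gives `h x = Q_δ x`. Finally `Q_δ` can be nonzero only if `δ` is the weight of a monomial.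
-/

open Asymptotics MvPolynomial

section Taylor

variable {E F : Type*} [NormedAddCommGroup E] [NormedSpace ℝ E]
  [NormedAddCommGroup F] [NormedSpace ℝ F]

lemma integral_one_sub_pow (n : ℕ) : ∫ t in (0 : ℝ)..1, (1 - t) ^ n = ((n : ℝ) + 1)⁻¹ := by
  simp [intervalIntegral.integral_comp_sub_left (fun t : ℝ => t ^ n) 1]

lemma norm_integral_one_sub_pow_smul_sub_le [CompleteSpace F] {g : ℝ → F} {a : F} {C : ℝ}
    (hg : ContinuousOn g (Set.Icc 0 1)) (hC : ∀ t ∈ Set.Icc (0 : ℝ) 1, ‖g t - a‖ ≤ C) (n : ℕ) :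
    ‖(∫ t in (0 : ℝ)..1, (1 - t) ^ n • g t) - ((n : ℝ) + 1)⁻¹ • a‖ ≤ C := by
  rw [← Set.uIcc_of_le zero_le_one] at hg
  have integral_sub : (∫ t in (0 : ℝ)..1, (1 - t) ^ n • g t) - ((n : ℝ) + 1)⁻¹ • a =
      ∫ t in (0 : ℝ)..1, (1 - t) ^ n • (g t - a) := by
    rw [← integral_one_sub_pow, ← intervalIntegral.integral_smul_const,
      ← intervalIntegral.integral_sub]
    · simp only [smul_sub]
    · exact ContinuousOn.intervalIntegrable (by fun_prop)
    · exact ContinuousOn.intervalIntegrable (by fun_prop)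
  have norm_integrand_le : ∀ t ∈ Set.uIoc (0 : ℝ) 1, ‖(1 - t) ^ n • (g t - a)‖ ≤ C := by
    intro t ht
    rw [Set.uIoc_of_le zero_le_one] at ht
    have pow_le_one : ‖(1 - t) ^ n‖ ≤ 1 := by
      rw [norm_pow, Real.norm_of_nonneg (sub_nonneg.2 ht.2)]
      exact pow_le_one₀ (sub_nonneg.2 ht.2) (sub_le_self 1 ht.1.le)
    rw [norm_smul]
    exact (mul_le_of_le_one_left (norm_nonneg _) pow_le_one).trans
      (hC t (Set.Ioc_subset_Icc_self ht))
  simpa [integral_sub] using intervalIntegral.norm_integral_le_of_norm_le_const norm_integrand_le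

lemma norm_sub_sum_iteratedFDeriv_le [CompleteSpace F] {f : E → F} {x y : E} {n : ℕ} {ε : ℝ}
    (hf : ∀ t ∈ Set.Icc (0 : ℝ) 1, ContDiffAt ℝ (n + 1) f (x + t • y))
    (hε : ∀ t ∈ Set.Icc (0 : ℝ) 1,
      ‖iteratedFDeriv ℝ (n + 1) f (x + t • y) - iteratedFDeriv ℝ (n + 1) f x‖ ≤ ε) :
    ‖f (x + y) - ∑ k ∈ Finset.range (n + 2),
      (k.factorial : ℝ)⁻¹ • iteratedFDeriv ℝ k f x (fun _ => y)‖ ≤ ε * ‖y‖ ^ (n + 1) := by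
  set D : ℝ → F := fun t => iteratedFDeriv ℝ (n + 1) f (x + t • y) fun _ => y
  set D₀ : F := iteratedFDeriv ℝ (n + 1) f x fun _ => y
  have continuousOn_D : ContinuousOn D (Set.Icc 0 1) := fun t ht => by
    have hcont : ContinuousAt (iteratedFDeriv ℝ (n + 1) f) (x + t • y) :=
      ((hf t ht).iteratedFDeriv_right (i := n + 1) (m := 0) (by simp)).continuousAt
    have hline : ContinuousAt (fun t : ℝ => x + t • y) t := by fun_prop
    exact ((ContinuousMultilinearMap.apply ℝ (fun _ : Fin (n + 1) => E) F
      fun _ => y).continuous.continuousAt.comp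
        (hcont.comp_of_eq hline rfl)).continuousWithinAt
  have norm_D_sub_le : ∀ t ∈ Set.Icc (0 : ℝ) 1, ‖D t - D₀‖ ≤ ε * ‖y‖ ^ (n + 1) := fun t ht => by
    simpa using (iteratedFDeriv ℝ (n + 1) f (x + t • y) -
      iteratedFDeriv ℝ (n + 1) f x).le_of_opNorm_le (hε t ht) fun _ => y
  have remainder_eq : f (x + y) - ∑ k ∈ Finset.range (n + 2),
      (k.factorial : ℝ)⁻¹ • iteratedFDeriv ℝ k f x (fun _ => y) =
      (n.factorial : ℝ)⁻¹ • ((∫ t in (0 : ℝ)..1, (1 - t) ^ n • D t) - ((n : ℝ) + 1)⁻¹ • D₀) := by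
    rw [map_add_eq_sum_add_integral_iteratedFDeriv hf, Finset.sum_range_succ _ (n + 1),
      add_sub_add_left_eq_sub, smul_sub, smul_smul, Nat.factorial_succ, Nat.cast_mul,
      Nat.cast_succ, mul_inv_rev]
  rw [remainder_eq, norm_smul, norm_inv, RCLike.norm_natCast]
  exact (mul_le_of_le_one_left (norm_nonneg _)
    (inv_le_one_of_one_le₀ (by exact_mod_cast n.factorial_pos))).trans
    (norm_integral_one_sub_pow_smul_sub_le continuousOn_D norm_D_sub_le n)

theorem sub_sum_iteratedFDeriv_isLittleO [CompleteSpace F] {f : E → F} {x : E} {n : ℕ}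
    (hf : ContDiffAt ℝ n f x) :
    (fun y => f (x + y) - ∑ k ∈ Finset.range (n + 1),
      (k.factorial : ℝ)⁻¹ • iteratedFDeriv ℝ k f x (fun _ => y)) =o[𝓝 0] fun y => ‖y‖ ^ n := by
  cases n with
  | zero =>
    have tendsto_add : Tendsto (fun y => x + y) (𝓝 0) (𝓝 x) := by
      simpa using (continuous_const_add x).tendsto 0
    simpa [isLittleO_one_iff, tendsto_sub_nhds_zero_iff, Function.comp_def] using
      hf.continuousAt.tendsto.comp tendsto_add
  | succ n =>
    refine isLittleO_iff.2 fun ε hε => ?_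
    have continuousAt_deriv : ContinuousAt (iteratedFDeriv ℝ (n + 1) f) x :=
      (hf.iteratedFDeriv_right (i := n + 1) (m := 0) (by simp)).continuousAt
    have eventually_near : ∀ᶠ z in 𝓝 x, ContDiffAt ℝ (n + 1 : ℕ) f z ∧
        ‖iteratedFDeriv ℝ (n + 1) f z - iteratedFDeriv ℝ (n + 1) f x‖ < ε := by
      simpa only [dist_eq_norm] using
        (hf.eventually (by simp)).and (Metric.tendsto_nhds.1 continuousAt_deriv ε hε)
    obtain ⟨r, hr, near⟩ := Metric.eventually_nhds_iff_ball.1 eventually_near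
    filter_upwards [Metric.ball_mem_nhds 0 hr] with y hy
    have segment_mem : ∀ t ∈ Set.Icc (0 : ℝ) 1, x + t • y ∈ Metric.ball x r := fun t ht => by
      rw [mem_ball_iff_norm, add_sub_cancel_left, norm_smul, Real.norm_of_nonneg ht.1]
      exact (mul_le_of_le_one_left (norm_nonneg y) ht.2).trans_lt (mem_ball_zero_iff.1 hy)
    rw [norm_pow, norm_norm]
    exact norm_sub_sum_iteratedFDeriv_le (fun t ht => mod_cast (near _ (segment_mem t ht)).1)
      fun t ht => (near _ (segment_mem t ht)).2.le

end Taylor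

lemma exists_mvPolynomial_eval_eq_multilinearMap {R ι κ : Type*} [CommSemiring R] [Finite ι]
    [Finite κ] (f : MultilinearMap R (fun _ : κ => ι → R) R) :
    ∃ P : MvPolynomial ι R, ∀ y, f (fun _ => y) = eval y P := by
  classical
  cases nonempty_fintype ι
  cases nonempty_fintype κ
  refine ⟨∑ r : κ → ι, C (f fun k => Pi.single (r k) 1) * ∏ k, X (r k), fun y => ?_⟩
  have expansion : y = ∑ j, y j • Pi.single j 1 := by
    simpa using pi_eq_sum_univ' y
  calc
    f (fun _ => y) = f fun _ => ∑ j, y j • Pi.single j 1 := by rw [← expansion]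
    _ = ∑ r : κ → ι, (∏ k, y (r k)) * f fun k => Pi.single (r k) 1 := by
      simp only [f.map_sum fun _ j => y j • (Pi.single j 1 : ι → R), f.map_smul_univ, smul_eq_mul]
    _ = _ := by simp [mul_comm]

theorem exists_mvPolynomial_sub_eval_isLittleO {ι : Type*} [Fintype ι] {f : (ι → ℝ) → ℝ}
    {x : ι → ℝ} {n : ℕ} (hf : ContDiffAt ℝ n f x) :
    ∃ P : MvPolynomial ι ℝ, (fun y => f (x + y) - eval y P) =o[𝓝 0] fun y => ‖y‖ ^ n := by
  choose P hP using fun k =>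
    exists_mvPolynomial_eval_eq_multilinearMap (iteratedFDeriv ℝ k f x).toMultilinearMap
  refine ⟨∑ k ∈ Finset.range (n + 1), C (k.factorial : ℝ)⁻¹ * P k, ?_⟩
  simpa [← hP] using sub_sum_iteratedFDeriv_isLittleO hf

lemma tendsto_rpow_nhdsGT_zero {r : ℝ} (hr : 0 < r) :
    Tendsto (fun t : ℝ => t ^ r) (𝓝[>] 0) (𝓝 0) := by
  simpa [Real.zero_rpow hr.ne'] using
    (Real.continuousAt_rpow_const 0 r (.inr hr.le)).tendsto.mono_left nhdsWithin_le_nhds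

lemma rpow_isLittleO_rpow_nhdsGT_zero {r s : ℝ} (hrs : r < s) :
    (fun t : ℝ => t ^ s) =o[𝓝[>] 0] fun t => t ^ r := by
  refine (((isLittleO_one_iff ℝ).2 (tendsto_rpow_nhdsGT_zero (sub_pos.2 hrs))).mul_isBigO
    (isBigO_refl (fun t : ℝ => t ^ r) _)).congr' ?_ (by simp)
  filter_upwards [self_mem_nhdsWithin] with t (ht : 0 < t)
  rw [← Real.rpow_add ht, sub_add_cancel]

lemma rpow_isBigO_rpow_nhdsGT_zero {r s : ℝ} (hrs : r ≤ s) :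
    (fun t : ℝ => t ^ s) =O[𝓝[>] 0] fun t => t ^ r := by
  rcases hrs.eq_or_lt with rfl | hlt
  · exact isBigO_refl _ _
  · exact (rpow_isLittleO_rpow_nhdsGT_zero hlt).isBigO

lemma eq_zero_of_rpow_smul_isLittleO {E : Type*} [NormedAddCommGroup E] [NormedSpace ℝ E] {a : ℝ}
    {v : E} (h : (fun t : ℝ => t ^ a • v) =o[𝓝[>] 0] fun t => t ^ a) : v = 0 := by
  by_contra hv
  have rpow_isLittleO_self : (fun t : ℝ => t ^ a) =o[𝓝[>] 0] fun t => t ^ a := by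
    simpa only [norm_smul, mul_comm _ ‖v‖, isLittleO_norm_left,
      isLittleO_const_mul_left_iff (norm_ne_zero_iff.2 hv)] using h.norm_left
  have rpow_ne_zero : ∀ᶠ t : ℝ in 𝓝[>] 0, t ^ a ≠ 0 := by
    filter_upwards [self_mem_nhdsWithin] with t ht using (Real.rpow_pos_of_pos ht a).ne'
  exact isLittleO_irrefl rpow_ne_zero.frequently rpow_isLittleO_self

theorem eq_zero_of_sum_rpow_smul_isLittleO {E : Type*} [NormedAddCommGroup E] [NormedSpace ℝ E]
    {S : Finset ℝ} {c : ℝ → E} {N : ℝ}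
    (h : (fun t : ℝ => ∑ s ∈ S, t ^ s • c s) =o[𝓝[>] 0] fun t => t ^ N) :
    ∀ s ∈ S, s ≤ N → c s = 0 := by
  induction S using Finset.induction_on_min with
  | empty => simp
  | insert a S ha ih =>
    have a_notMem : a ∉ S := fun haS => lt_irrefl a (ha a haS)
    simp only [Finset.sum_insert a_notMem] at h
    intro s hs hsN
    have haN : a ≤ N := by
      rcases Finset.mem_insert.1 hs with rfl | hsS
      exacts [hsN, (ha s hsS).le.trans hsN]
    have tail_isLittleO : (fun t : ℝ => ∑ s ∈ S, t ^ s • c s) =o[𝓝[>] 0] fun t => t ^ a :=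
      IsLittleO.fun_sum fun s hs => by
        simpa using (rpow_isLittleO_rpow_nhdsGT_zero (ha s hs)).smul_isBigO
          (isBigO_const_const (c s) (one_ne_zero (α := ℝ)) _)
    have lead_eq_zero : c a = 0 := eq_zero_of_rpow_smul_isLittleO <| by
      simpa using (h.trans_isBigO (rpow_isBigO_rpow_nhdsGT_zero haN)).sub tail_isLittleO
    rcases Finset.mem_insert.1 hs with rfl | hsS
    · exact lead_eq_zero
    · exact ih (by simpa [lead_eq_zero] using h) s hsS hsN

section WeightedDilation

variable {ι : Type*} {w : ι → ℝ}

/-- The weighted dilation `(x i) ↦ (t ^ w i * x i)` of `ι → ℝ` with real weights `w`, the scaling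
under which quasi-homogeneous functions are multiplied by a power of `t`. -/
def weightedDilation (w : ι → ℝ) (t : ℝ) (x : ι → ℝ) : ι → ℝ :=
  fun i => t ^ w i * x i

lemma weightedDilation_natCast (v : ι → ℕ) (t : ℝ) (x : ι → ℝ) :
    weightedDilation (fun i => (v i : ℝ)) t x = fun i => t ^ v i * x i :=
  funext fun i => by rw [weightedDilation, Real.rpow_natCast]

lemma eval_weightedDilation_of_isWeightedHomogeneous {P : MvPolynomial ι ℝ} {s t : ℝ}
    (hP : IsWeightedHomogeneous w P s) (ht : 0 < t) (x : ι → ℝ) :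
    eval (weightedDilation w t x) P = t ^ s * eval x P := by
  rw [eval_eq, eval_eq, Finset.mul_sum]
  refine Finset.sum_congr rfl fun d hd => ?_
  have prod_rpow : ∏ i ∈ d.support, (t ^ w i) ^ d i = t ^ s := by
    rw [← hP (mem_support_iff.1 hd), Finsupp.weight_apply, Finsupp.sum, Real.rpow_sum_of_pos ht]
    refine Finset.prod_congr rfl fun i _ => ?_
    rw [← Real.rpow_mul_natCast ht.le, nsmul_eq_mul, mul_comm]
  simp only [weightedDilation, mul_pow, Finset.prod_mul_distrib, prod_rpow]
  ring

lemma sum_weightedHomogeneousComponent_of_weight_mem {R M σ : Type*} [CommSemiring R]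
    [AddCommMonoid M] {v : σ → M} {P : MvPolynomial σ R} {S : Finset M}
    (hS : ∀ d ∈ P.support, Finsupp.weight v d ∈ S) :
    ∑ s ∈ S, weightedHomogeneousComponent v s P = P := by
  conv_rhs => rw [← sum_weightedHomogeneousComponent v P]
  refine (finsum_eq_sum_of_support_subset _ fun s hs => ?_).symm
  by_contra hsS
  exact hs (weightedHomogeneousComponent_eq_zero' s P fun d hd hds => hsS (hds ▸ hS d hd))

lemma eval_weightedDilation_eq_sum {P : MvPolynomial ι ℝ} {S : Finset ℝ}
    (hS : ∀ d ∈ P.support, Finsupp.weight w d ∈ S) {t : ℝ} (ht : 0 < t) (x : ι → ℝ) :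
    eval (weightedDilation w t x) P =
      ∑ s ∈ S, t ^ s * eval x (weightedHomogeneousComponent w s P) := by
  conv_lhs => rw [← sum_weightedHomogeneousComponent_of_weight_mem hS]
  rw [map_sum]
  exact Finset.sum_congr rfl fun s _ => eval_weightedDilation_of_isWeightedHomogeneous
    (weightedHomogeneousComponent_isWeightedHomogeneous s P) ht x

lemma eval_weightedHomogeneousComponent_eq_of_isLittleO {P : MvPolynomial ι ℝ} {x : ι → ℝ}
    {δ a : ℝ} (h : (fun t : ℝ => t ^ δ * a - eval (weightedDilation w t x) P)
      =o[𝓝[>] 0] fun t => t ^ δ) :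
    a = eval x (weightedHomogeneousComponent w δ P) := by
  classical
  set S : Finset ℝ := insert δ (P.support.image (Finsupp.weight w)) with hS
  have weight_mem : ∀ d ∈ P.support, Finsupp.weight w d ∈ S := fun d hd =>
    Finset.mem_insert_of_mem (Finset.mem_image_of_mem _ hd)
  have sum_isLittleO : (fun t : ℝ => ∑ s ∈ S, t ^ s • ((if s = δ then a else 0) -
      eval x (weightedHomogeneousComponent w s P))) =o[𝓝[>] 0] fun t => t ^ δ := by
    refine h.congr' ?_ .rfl
    filter_upwards [self_mem_nhdsWithin] with t ht
    simp [eval_weightedDilation_eq_sum weight_mem ht, mul_sub, hS]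
  have coeff_eq_zero := eq_zero_of_sum_rpow_smul_isLittleO sum_isLittleO δ
    (Finset.mem_insert_self _ _) le_rfl
  simpa [sub_eq_zero] using coeff_eq_zero

lemma tendsto_weightedDilation_zero (hw : ∀ i, 0 < w i) (x : ι → ℝ) :
    Tendsto (fun t => weightedDilation w t x) (𝓝[>] 0) (𝓝 0) := by
  refine tendsto_pi_nhds.2 fun i => ?_
  simpa [weightedDilation] using (tendsto_rpow_nhdsGT_zero (hw i)).mul_const (x i)

variable [Fintype ι] {μ : ℝ}

lemma weightedDilation_isBigO_rpow (hw : ∀ i, μ ≤ w i) (x : ι → ℝ) :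
    (fun t => weightedDilation w t x) =O[𝓝[>] 0] fun t => t ^ μ :=
  isBigO_pi.2 fun i => by
    simpa [weightedDilation, mul_comm] using
      (rpow_isBigO_rpow_nhdsGT_zero (hw i)).const_mul_left (x i)

lemma norm_weightedDilation_pow_isBigO_rpow (hw : ∀ i, μ ≤ w i) {δ : ℝ} {k : ℕ} (hδ : δ ≤ k * μ)
    (x : ι → ℝ) :
    (fun t => ‖weightedDilation w t x‖ ^ k) =O[𝓝[>] 0] fun t => t ^ δ := by
  have rpow_pow : (fun t : ℝ => (t ^ μ) ^ k) =ᶠ[𝓝[>] 0] fun t => t ^ (k * μ) := by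
    filter_upwards [self_mem_nhdsWithin] with t (ht : 0 < t)
    rw [← Real.rpow_mul_natCast ht.le, mul_comm]
  exact (((weightedDilation_isBigO_rpow hw x).norm_left.pow k).congr' .rfl rpow_pow).trans
    (rpow_isBigO_rpow_nhdsGT_zero hδ)

theorem quasiHomogeneous_function_is_polynomial_general (hμ : 0 < μ) (hw : ∀ i, μ ≤ w i) {δ : ℝ}
    {k : ℕ} (hδ : δ ≤ k * μ) {h : (ι → ℝ) → ℝ} (hh : ContDiffAt ℝ k h 0)
    (hqh : ∀ᶠ x in 𝓝 0, ∀ᶠ t in 𝓝[>] 0, h (weightedDilation w t x) = t ^ δ * h x) :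
    ∃ P : MvPolynomial ι ℝ, IsWeightedHomogeneous w P δ ∧ ∀ᶠ x in 𝓝 0, h x = eval x P := by
  obtain ⟨Q, hQ⟩ := exists_mvPolynomial_sub_eval_isLittleO hh
  refine ⟨weightedHomogeneousComponent w δ Q,
    weightedHomogeneousComponent_isWeightedHomogeneous δ Q, ?_⟩
  filter_upwards [hqh] with x hx
  have remainder_isLittleO : (fun t => h (weightedDilation w t x) -
      eval (weightedDilation w t x) Q) =o[𝓝[>] 0] fun t => t ^ δ := by
    simpa [Function.comp_def] using (hQ.comp_tendsto
      (tendsto_weightedDilation_zero (fun i => hμ.trans_le (hw i)) x)).trans_isBigO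
      (norm_weightedDilation_pow_isBigO_rpow hw hδ x)
  refine eval_weightedHomogeneousComponent_eq_of_isLittleO (remainder_isLittleO.congr' ?_ .rfl)
  filter_upwards [hx] with t ht
  rw [ht]

end WeightedDilation

lemma eq_zero_or_exists_nat_of_isWeightedHomogeneous_natCast {σ R M : Type*} [CommSemiring R]
    [Semiring M] [CharZero M] {v : σ → ℕ} {P : MvPolynomial σ R} {δ : M}
    (hP : IsWeightedHomogeneous (fun i => (v i : M)) P δ) :
    P = 0 ∨ ∃ d : ℕ, δ = d ∧ IsWeightedHomogeneous v P d := by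
  have weight_natCast (α : σ →₀ ℕ) :
      Finsupp.weight (fun i => (v i : M)) α = (Finsupp.weight v α : ℕ) := by
    simp [Finsupp.weight_apply, Finsupp.sum]
  refine or_iff_not_imp_left.2 fun hP0 => ?_
  obtain ⟨α, hα⟩ := support_nonempty.2 hP0
  have hδ : δ = (Finsupp.weight v α : ℕ) := by
    rw [← weight_natCast, hP (mem_support_iff.1 hα)]
  exact ⟨_, hδ, fun β hβ => Nat.cast_injective (R := M) (by rw [← weight_natCast, hP hβ, hδ])⟩

/-- A quasi-homogeneous germ of a smooth function (with positive integer weights and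
real quasi-degree `δ`) is either identically zero near `0`, or `δ` is a non-negative
integer and the germ coincides near `0` with a weighted homogeneous polynomial of
weighted degree `δ`. -/
theorem quasiHomogeneous_function_is_polynomial (m : ℕ) (lam : Fin m → ℕ)
    (hpos : ∀ i, 0 < lam i) (δ : ℝ)
    (U : Set (Fin m → ℝ)) (hU : U ∈ 𝓝 (0 : Fin m → ℝ))
    (h : (Fin m → ℝ) → ℝ) (hsm : ContDiffOn ℝ (⊤ : ℕ∞) h U)
    (hqh : ∀ t : ℝ, t ∈ Set.Ioc (0 : ℝ) 1 → ∀ x ∈ U,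
      (fun i => t ^ (lam i) * x i) ∈ U →
      h (fun i => t ^ (lam i) * x i) = t ^ δ * h x) :
    (∀ᶠ x in 𝓝 (0 : Fin m → ℝ), h x = 0) ∨
    (∃ d : ℕ, δ = (d : ℝ) ∧ ∃ P : MvPolynomial (Fin m) ℝ,
      (∀ α ∈ P.support, ∑ i, α i * lam i = d) ∧
      ∀ᶠ x in 𝓝 (0 : Fin m → ℝ), h x = MvPolynomial.eval x P) := by
  obtain ⟨k, hk⟩ := exists_nat_ge δ
  have orbit_eq : ∀ᶠ x in 𝓝 0, ∀ᶠ t in 𝓝[>] 0,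
      h (weightedDilation (fun i => (lam i : ℝ)) t x) = t ^ δ * h x := by
    filter_upwards [hU] with x hx
    filter_upwards [Ioc_mem_nhdsGT zero_lt_one,
      tendsto_weightedDilation_zero (fun i => Nat.cast_pos.2 (hpos i)) x hU] with t ht htx
    rw [Set.mem_preimage, weightedDilation_natCast] at htx
    rw [weightedDilation_natCast]
    exact hqh t ht x hx htx
  obtain ⟨P, hP, h_eq⟩ := quasiHomogeneous_function_is_polynomial_general one_pos
    (fun i => Nat.one_le_cast.2 (hpos i)) (by simpa using hk)
    ((hsm.contDiffAt hU).of_le (by exact_mod_cast le_top)) orbit_eq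
  obtain rfl | ⟨d, hδ, hPd⟩ := eq_zero_or_exists_nat_of_isWeightedHomogeneous_natCast hP
  · exact .inl (by simpa using h_eq)
  · refine .inr ⟨d, hδ, P, fun α hα => ?_, h_eq⟩
    simpa [Finsupp.weight_apply, Finsupp.sum_fintype] using hPd (mem_support_iff.1 hα)
end
end

section
/- Let g:(ℝ,0)→(ℝ^4,0) be the curve-germ g(t) = (t^4,t^5,t^6,t^7). For every germ at 0 of a smooth differential 2-form ω on ℝ^4 with dω = 0 on a neighbourhood of 0, there exist unique real numbers c_1,…,c_9 such that the 2-form ω − (c_1·dx_1∧dx_2 + c_2·dx_1∧dx_3 + c_3·dx_2∧dx_3 + c_4·dx_1∧dx_4 + c_5·dx_2∧dx_4 + c_6·dx_3∧dx_4 + c_7·x_1dx_1∧dx_2 + c_8·x_1dx_1∧dx_3 + c_9·x_1dx_1∧dx_4) has zero algebraic restriction to g. (Equivalently: the algebraic restrictions to g of these nine 2-forms form a basis of the vector space of algebraic restrictions of closed 2-forms to g.) -/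
open Filter Topology

noncomputable section

/-- A (set-theoretic) differential 1-form on `ℝ^m`: a map assigning to each point a
function on tangent vectors. -/
def Form1 (m : ℕ) := (Fin m → ℝ) → (Fin m → ℝ) → ℝ

/-- A (set-theoretic) differential 2-form on `ℝ^m`. -/
def Form2 (m : ℕ) := (Fin m → ℝ) → (Fin m → ℝ) → (Fin m → ℝ) → ℝ

/-- A germ at `0` of a smooth differential 1-form: pointwise linear in the tangent
vector, and with coefficients smooth on a neighbourhood of `0`. -/
def IsForm1 (m : ℕ) (β : Form1 m) : Prop :=
  (∀ x u₁ u₂ (c : ℝ), β x (u₁ + c • u₂) = β x u₁ + c * β x u₂) ∧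
  (∀ u, ∃ U ∈ 𝓝 (0 : Fin m → ℝ), ContDiffOn ℝ (⊤ : ℕ∞) (fun x => β x u) U)

/-- A germ at `0` of a smooth differential 2-form: pointwise bilinear and alternating
in the tangent vectors, with coefficients smooth on a neighbourhood of `0`. -/
def IsForm2 (m : ℕ) (ω : Form2 m) : Prop :=
  (∀ x u₁ u₂ v (c : ℝ), ω x (u₁ + c • u₂) v = ω x u₁ v + c * ω x u₂ v) ∧
  (∀ x u v, ω x u v = - ω x v u) ∧
  (∀ u v, ∃ U ∈ 𝓝 (0 : Fin m → ℝ), ContDiffOn ℝ (⊤ : ℕ∞) (fun x => ω x u v) U)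

/-- The exterior derivative of a 1-form, evaluated on a pair of (constant) vectors. -/
def extD1 (m : ℕ) (β : Form1 m) : Form2 m :=
  fun x u v => fderiv ℝ (fun y => β y v) x u - fderiv ℝ (fun y => β y u) x v

/-- The exterior derivative of a 2-form, evaluated on a triple of (constant) vectors. -/
def extD2 (m : ℕ) (ω : Form2 m) (x u v w : Fin m → ℝ) : ℝ :=
  fderiv ℝ (fun y => ω y v w) x u - fderiv ℝ (fun y => ω y u w) x v
    + fderiv ℝ (fun y => ω y u v) x w

/-- A 2-form is closed near `0` if its exterior derivative vanishes near `0`. -/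
def Closed2 (m : ℕ) (ω : Form2 m) : Prop :=
  ∀ᶠ x in 𝓝 (0 : Fin m → ℝ), ∀ u v w, extD2 m ω x u v w = 0

/-- A 1-form vanishes on the image of a curve-germ. -/
def VanishesOn1 (m : ℕ) (β : Form1 m) (f : ℝ → (Fin m → ℝ)) : Prop :=
  ∀ᶠ t in 𝓝 (0 : ℝ), ∀ u, β (f t) u = 0

/-- A 2-form vanishes on the image of a curve-germ. -/
def VanishesOn2 (m : ℕ) (ω : Form2 m) (f : ℝ → (Fin m → ℝ)) : Prop :=
  ∀ᶠ t in 𝓝 (0 : ℝ), ∀ u v, ω (f t) u v = 0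

/-- A 2-form `ω` has zero algebraic restriction to the curve-germ `f` if `ω = α + dβ`
near `0` for a smooth 2-form `α` and a smooth 1-form `β` both vanishing on `im f`. -/
def ZeroAR2 (m : ℕ) (ω : Form2 m) (f : ℝ → (Fin m → ℝ)) : Prop :=
  ∃ (α : Form2 m) (β : Form1 m), IsForm2 m α ∧ IsForm1 m β ∧
    VanishesOn2 m α f ∧ VanishesOn1 m β f ∧
    ∀ᶠ x in 𝓝 (0 : Fin m → ℝ), ∀ u v, ω x u v = α x u v + extD1 m β x u v

/-- Two 2-forms have the same algebraic restriction to `f` if their difference has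
zero algebraic restriction to `f`. -/
def SameAR2 (m : ℕ) (ω₁ ω₂ : Form2 m) (f : ℝ → (Fin m → ℝ)) : Prop :=
  ZeroAR2 m (fun x u v => ω₁ x u v - ω₂ x u v) f

/-- The pullback of a 2-form by a (germ of) smooth map. -/
def pull2 (m : ℕ) (Φ : (Fin m → ℝ) → (Fin m → ℝ)) (ω : Form2 m) : Form2 m :=
  fun x u v => ω (Φ x) (fderiv ℝ Φ x u) (fderiv ℝ Φ x v)

/-- The constant 2-form `dxᵢ ∧ dxⱼ` on `ℝ^m` (indices `0`-based). -/
def wedge (m : ℕ) (i j : Fin m) : Form2 m := fun _ u v => u i * v j - u j * v i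

/-- The 2-form `x_l · dxᵢ ∧ dxⱼ` on `ℝ^m` (indices `0`-based). -/
def mwedge (m : ℕ) (l i j : Fin m) : Form2 m :=
  fun x u v => x l * (u i * v j - u j * v i)

/-- The nine 2-forms of Proposition 4.2. -/
def basis4567 : Fin 9 → Form2 4 :=
  ![wedge 4 0 1, wedge 4 0 2, wedge 4 1 2, wedge 4 0 3, wedge 4 1 3, wedge 4 2 3,
    mwedge 4 0 0 1, mwedge 4 0 0 2, mwedge 4 0 0 3]

/-!
The algebraic restriction of `ω` to `g` depends only on the values of `ω` along `g`, taken modulo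
the values of the forms `dβ` with `β` vanishing on `im g`. These classes form a vector space, in
which a Taylor expansion of the coefficients expresses the class of `ω` through the classes of the
forms `t ^ w dxᵢ ∧ dxⱼ`.

If `x ^ n` and `x ^ n'` are monomials which agree along `g`, then `(x ^ n - x ^ n') dxₖ` vanishes
on `im g`, so its differential gives a linear relation between the classes. These relations kill
every class with `w ≥ 8`, hence the quadratic terms of the Taylor expansion. Together with
closedness at `0` they reduce the constant and linear terms to the nine forms of the basis.

Conversely, let a combination of the nine forms equal `d (∑ Bᵢ dxᵢ)` along `g`, where each `Bᵢ`
vanishes on `im g`. Differentiating `Bᵢ (g t) = 0` and comparing coefficients of powers of `t`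
constrains the first and second derivatives of `Bᵢ` at `0` enough to make every coefficient of
the combination vanish.
-/

local notation "∞" => ((⊤ : ℕ∞) : WithTop ℕ∞)

section Calculus

universe u

variable {m : ℕ}

/-- The partial derivative `∂F/∂xᵢ`, as a function on `ℝ^m`. -/
def partialDeriv (i : Fin m) (F : (Fin m → ℝ) → ℝ) : (Fin m → ℝ) → ℝ :=
  fun x => fderiv ℝ F x (Pi.single i 1)

lemma fderiv_apply_eq_sum_partialDeriv (F : (Fin m → ℝ) → ℝ) (x u : Fin m → ℝ) :
    fderiv ℝ F x u = ∑ i, u i * partialDeriv i F x := by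
  conv_lhs => rw [pi_eq_sum_univ' u]
  simp only [map_sum, map_smul, smul_eq_mul, partialDeriv]

lemma contDiff_partialDeriv {F : (Fin m → ℝ) → ℝ} (hF : ContDiff ℝ ∞ F) (i : Fin m) :
    ContDiff ℝ ∞ (partialDeriv i F) :=
  (hF.fderiv_right (by simp)).clm_apply contDiff_const

lemma partialDeriv_comm {F : (Fin m → ℝ) → ℝ} (hF : ContDiff ℝ ∞ F) (i j : Fin m)
    (x : Fin m → ℝ) :
    partialDeriv j (partialDeriv i F) x = partialDeriv i (partialDeriv j F) x := by
  have hdF : DifferentiableAt ℝ (fderiv ℝ F) x :=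
    ((hF.fderiv_right (m := ∞) (by simp)).differentiable (by simp)).differentiableAt
  have hasFDerivAt_partialDeriv (i : Fin m) : HasFDerivAt (partialDeriv i F)
      ((fderiv ℝ (fderiv ℝ F) x).flip (Pi.single i 1)) x :=
    (hdF.hasFDerivAt.clm_apply (hasFDerivAt_const (Pi.single i 1) x)).congr_fderiv (by simp)
  have two_le : minSmoothness ℝ 2 ≤ (∞ : WithTop ℕ∞) := by
    rw [minSmoothness_of_isRCLikeNormedField]
    exact WithTop.coe_le_coe.2 (le_top : (2 : ℕ∞) ≤ ⊤)
  calc partialDeriv j (partialDeriv i F) x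
      = fderiv ℝ (fderiv ℝ F) x (Pi.single j 1) (Pi.single i 1) :=
        DFunLike.congr_fun (hasFDerivAt_partialDeriv i).fderiv _
    _ = fderiv ℝ (fderiv ℝ F) x (Pi.single i 1) (Pi.single j 1) :=
        hF.contDiffAt.isSymmSndFDerivAt two_le _ _
    _ = partialDeriv i (partialDeriv j F) x :=
        (DFunLike.congr_fun (hasFDerivAt_partialDeriv j).fderiv _).symm

lemma exists_contDiff_eventuallyEq {F : (Fin m → ℝ) → ℝ}
    (hF : ∃ U ∈ 𝓝 (0 : Fin m → ℝ), ContDiffOn ℝ ∞ F U) :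
    ∃ G : (Fin m → ℝ) → ℝ, ContDiff ℝ ∞ G ∧ G =ᶠ[𝓝 0] F := by
  obtain ⟨U, hU, hF⟩ := hF
  obtain ⟨r, hr, hrU⟩ := Metric.nhds_basis_ball.mem_iff.1 hU
  let φ : ContDiffBump (0 : Fin m → ℝ) := ⟨r / 4, r / 2, by positivity, by linarith⟩
  refine ⟨fun x => φ x * F x, contDiff_iff_contDiffAt.2 fun x => ?_, ?_⟩
  · by_cases hx : x ∈ Metric.ball 0 r
    · exact φ.contDiff.contDiffAt.mul
        (hF.contDiffAt (mem_of_superset (Metric.isOpen_ball.mem_nhds hx) hrU))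
    · have hx' : x ∉ tsupport φ := by
        rw [φ.tsupport_eq]
        exact fun h => hx (Metric.closedBall_subset_ball (half_lt_self hr) h)
      refine (contDiffAt_const (c := (0 : ℝ))).congr_of_eventuallyEq ?_
      filter_upwards [notMem_tsupport_iff_eventuallyEq.1 hx'] with y hy
      simp [hy]
  · filter_upwards [φ.eventuallyEq_one] with x hx
    simp [hx]

variable {E G : Type u} [NormedAddCommGroup E] [NormedSpace ℝ E]
  [NormedAddCommGroup G] [NormedSpace ℝ G]

lemma hasFDerivAt_parametric_intervalIntegral [ProperSpace E] {F : E × ℝ → G}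
    (hF : ContDiff ℝ 1 F) (a b : ℝ) (x : E) :
    HasFDerivAt (fun y => ∫ s in a..b, F (y, s))
      (∫ s in a..b, (fderiv ℝ F (x, s)).comp (ContinuousLinearMap.inl ℝ E ℝ)) x := by
  let F' : E × ℝ → (E →L[ℝ] G) := fun p => (fderiv ℝ F p).comp (.inl ℝ E ℝ)
  have hF' : Continuous F' := (hF.continuous_fderiv (by simp)).clm_comp continuous_const
  have slice (y : E) : Continuous fun s : ℝ => (y, s) := by fun_prop
  have hder (y : E) (s : ℝ) : HasFDerivAt (fun z => F (z, s)) (F' (y, s)) y :=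
    ((hF.differentiable (by simp)).differentiableAt.hasFDerivAt).comp y
      (hasFDerivAt_prodMk_left y s)
  obtain ⟨C, hC⟩ := ((isCompact_closedBall x 1).prod
    (isCompact_uIcc (a := a) (b := b))).exists_bound_of_continuousOn hF'.continuousOn
  exact intervalIntegral.hasFDerivAt_integral_of_dominated_of_fderiv_le
    (F := fun y s => F (y, s)) (F' := fun y s => F' (y, s)) (bound := fun _ => C)
    (Metric.closedBall_mem_nhds x one_pos)
    (.of_forall fun y => (hF.continuous.comp (slice y)).aestronglyMeasurable)
    ((hF.continuous.comp (slice x)).intervalIntegrable _ _)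
    (hF'.comp (slice x)).aestronglyMeasurable
    (.of_forall fun s hs y hy => hC (y, s) ⟨hy, Set.uIoc_subset_uIcc hs⟩)
    intervalIntegrable_const (.of_forall fun s _ y _ => hder y s)

lemma contDiff_nat_parametric_intervalIntegral [ProperSpace E] (n : ℕ) :
    ∀ {G : Type u} [NormedAddCommGroup G] [NormedSpace ℝ G] {F : E × ℝ → G},
      ContDiff ℝ n F → ∀ a b : ℝ, ContDiff ℝ n fun x => ∫ s in a..b, F (x, s) := by
  induction n with
  | zero =>
    intro G _ _ F hF a b
    simp only [Nat.cast_zero, contDiff_zero] at hF ⊢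
    exact intervalIntegral.continuous_parametric_intervalIntegral_of_continuous'
      (f := fun x s => F (x, s)) hF a b
  | succ n ih =>
    intro G _ _ F hF a b
    push_cast at hF ⊢
    have hderiv := hasFDerivAt_parametric_intervalIntegral (hF.of_le le_add_self) a b
    refine contDiff_succ_iff_fderiv.2
      ⟨fun x => (hderiv x).differentiableAt, by simp, ?_⟩
    rw [funext fun x => (hderiv x).fderiv]
    exact ih ((hF.fderiv_right le_rfl).clm_comp contDiff_const) a b

lemma contDiff_parametric_intervalIntegral [ProperSpace E] {n : ℕ∞} {F : E × ℝ → G}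
    (hF : ContDiff ℝ n F) (a b : ℝ) : ContDiff ℝ n fun x => ∫ s in a..b, F (x, s) :=
  contDiff_iff_forall_nat_le.2 fun k hk =>
    contDiff_nat_parametric_intervalIntegral k (hF.of_le (mod_cast hk)) a b

lemma exists_eq_add_sum_mul {F : (Fin m → ℝ) → ℝ} (hF : ContDiff ℝ ∞ F) :
    ∃ H : Fin m → (Fin m → ℝ) → ℝ, (∀ i, ContDiff ℝ ∞ (H i)) ∧
      (∀ i, H i 0 = partialDeriv i F 0) ∧ ∀ x, F x = F 0 + ∑ i, x i * H i x := by
  refine ⟨fun i x => ∫ s in (0 : ℝ)..1, partialDeriv i F (s • x), fun i => ?_, fun i => by simp,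
    fun x => ?_⟩
  · exact contDiff_parametric_intervalIntegral (F := fun p => partialDeriv i F (p.2 • p.1))
      ((contDiff_partialDeriv hF i).comp (by fun_prop)) 0 1
  · have hcont (i : Fin m) : Continuous fun s : ℝ => partialDeriv i F (s • x) :=
      (contDiff_partialDeriv hF i).continuous.comp (by fun_prop)
    have hder (s : ℝ) : HasDerivAt (fun s : ℝ => F (s • x))
        (∑ i, x i * partialDeriv i F (s • x)) s := by
      rw [← fderiv_apply_eq_sum_partialDeriv]
      exact (hF.differentiable (by simp)).differentiableAt.hasFDerivAt.comp_hasDerivAt s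
        (by simpa using (hasDerivAt_id s).smul_const x)
    have integral_eq := intervalIntegral.integral_eq_sub_of_hasDerivAt (fun s _ => hder s)
      ((continuous_finsetSum _ fun i _ => (hcont i).const_mul (x i)).intervalIntegrable 0 1)
    rw [intervalIntegral.integral_finsetSum
      fun i _ => ((hcont i).const_mul (x i)).intervalIntegrable 0 1] at integral_eq
    simp only [intervalIntegral.integral_const_mul, one_smul, zero_smul] at integral_eq
    linarith

lemma exists_eq_taylor_one_add_sum_mul_mul {F : (Fin m → ℝ) → ℝ} (hF : ContDiff ℝ ∞ F) :
    ∃ Q : Fin m → Fin m → (Fin m → ℝ) → ℝ, (∀ i j, ContDiff ℝ ∞ (Q i j)) ∧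
      ∀ x, F x = F 0 + ∑ i, x i * partialDeriv i F 0 + ∑ i, ∑ j, x i * x j * Q i j x := by
  obtain ⟨H, hH, hH0, hFH⟩ := exists_eq_add_sum_mul hF
  choose Q hQ _ hHQ using fun i => exists_eq_add_sum_mul (hH i)
  refine ⟨Q, hQ, fun x => ?_⟩
  rw [hFH x, add_assoc, ← Finset.sum_add_distrib]
  congr 1
  refine Finset.sum_congr rfl fun i _ => ?_
  rw [hHQ i x, hH0, mul_add, Finset.mul_sum]
  simp only [mul_assoc]

end Calculus

section Forms

variable {m : ℕ}

lemma eq_sum_mul_apply_single {L : (Fin m → ℝ) → ℝ}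
    (hL : ∀ u₁ u₂ (c : ℝ), L (u₁ + c • u₂) = L u₁ + c * L u₂) (u : Fin m → ℝ) :
    L u = ∑ i, u i * L (Pi.single i 1) := by
  have map_zero : L 0 = 0 := by simpa using hL 0 0 1
  let L' : (Fin m → ℝ) →ₗ[ℝ] ℝ :=
    { toFun := L
      map_add' := fun u v => by simpa using hL u v 1
      map_smul' := fun c u => by simpa [map_zero] using hL 0 u c }
  change L' u = ∑ i, u i * L' (Pi.single i 1)
  conv_lhs => rw [pi_eq_sum_univ' u]
  simp only [map_sum, map_smul, smul_eq_mul]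

lemma IsForm2.eq_sum {ω : Form2 m} (hω : IsForm2 m ω) (x u v : Fin m → ℝ) :
    ω x u v = ∑ i, ∑ j ∈ Finset.Ioi i,
      ω x (Pi.single i 1) (Pi.single j 1) * (u i * v j - u j * v i) := by
  have linear_left (v : Fin m → ℝ) :=
    eq_sum_mul_apply_single (L := fun u => ω x u v) fun u₁ u₂ c => hω.1 x u₁ u₂ v c
  have linear_right (u : Fin m → ℝ) := eq_sum_mul_apply_single (L := ω x u) fun v₁ v₂ c => by
    rw [hω.2.1, hω.1, hω.2.1 x v₁, hω.2.1 x v₂]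
    ring
  have diag_eq_zero (i : Fin m) : ω x (Pi.single i 1) (Pi.single i 1) = 0 := by
    linarith [hω.2.1 x (Pi.single i 1) (Pi.single i 1)]
  let term (j i : Fin m) : ℝ := u i * (v j * ω x (Pi.single i 1) (Pi.single j 1))
  calc ω x u v = ∑ i, ∑ j, term j i := by
        rw [linear_left]
        exact Finset.sum_congr rfl fun i _ => by rw [linear_right, Finset.mul_sum]
    _ = ∑ i, ∑ j ∈ {i}ᶜ, term j i := Finset.sum_congr rfl fun i _ => by
        rw [Fintype.sum_eq_add_sum_compl i]
        simp only [term, diag_eq_zero, mul_zero, zero_add]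
    _ = ∑ i, ∑ j ∈ Finset.Ioi i, (term j i + term i j) :=
        (Finset.sum_sum_Ioi_add_eq_sum_sum_off_diag term).symm
    _ = _ := Finset.sum_congr rfl fun i _ => Finset.sum_congr rfl fun j _ => by
        simp only [term, hω.2.1 x (Pi.single j 1)]
        ring

lemma IsForm2.sub {ω η : Form2 m} (hω : IsForm2 m ω) (hη : IsForm2 m η) :
    IsForm2 m fun x u v => ω x u v - η x u v := by
  refine ⟨fun x u₁ u₂ v c => ?_, fun x u v => ?_, fun u v => ?_⟩
  · linear_combination hω.1 x u₁ u₂ v c - hη.1 x u₁ u₂ v c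
  · linear_combination hω.2.1 x u v - hη.2.1 x u v
  · obtain ⟨U, hU, hωU⟩ := hω.2.2 u v
    obtain ⟨V, hV, hηV⟩ := hη.2.2 u v
    exact ⟨U ∩ V, inter_mem hU hV,
      (hωU.mono Set.inter_subset_left).sub (hηV.mono Set.inter_subset_right)⟩

lemma IsForm2.sum_mul {ι : Type*} [Fintype ι] {η : ι → Form2 m} (hη : ∀ k, IsForm2 m (η k))
    (c : ι → ℝ) : IsForm2 m fun x u v => ∑ k, c k * η k x u v := by
  refine ⟨fun x u₁ u₂ v r => ?_, fun x u v => ?_, fun u v => ?_⟩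
  · simp only [(hη _).1 x u₁ u₂ v r, mul_add, Finset.sum_add_distrib, Finset.mul_sum]
    simp only [mul_left_comm]
  · rw [← Finset.sum_neg_distrib]
    exact Finset.sum_congr rfl fun k _ => by rw [(hη k).2.1 x u v, mul_neg]
  · choose U hU hηU using fun k => (hη k).2.2 u v
    exact ⟨⋂ k, U k, iInter_mem.2 hU, ContDiffOn.sum fun k _ =>
      contDiffOn_const.mul ((hηU k).mono (Set.iInter_subset U k))⟩

lemma isForm2_wedge (i j : Fin m) : IsForm2 m (wedge m i j) := by
  refine ⟨fun x u₁ u₂ v c => ?_, fun x u v => ?_, fun u v =>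
    ⟨Set.univ, univ_mem, contDiffOn_const⟩⟩ <;>
  simp only [wedge, Pi.add_apply, Pi.smul_apply, smul_eq_mul] <;> ring

lemma isForm2_mwedge (l i j : Fin m) : IsForm2 m (mwedge m l i j) := by
  refine ⟨fun x u₁ u₂ v c => ?_, fun x u v => ?_, fun u v =>
    ⟨Set.univ, univ_mem, ((contDiff_apply ℝ ℝ l).mul contDiff_const).contDiffOn⟩⟩ <;>
  simp only [mwedge, Pi.add_apply, Pi.smul_apply, smul_eq_mul] <;> ring

/-- The 1-form `∑ᵢ Bᵢ dxᵢ` on `ℝ^m` with coefficient functions `Bᵢ`. -/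
def oneForm (B : Fin m → (Fin m → ℝ) → ℝ) : Form1 m := fun x u => ∑ i, B i x * u i

lemma extD1_oneForm {B : Fin m → (Fin m → ℝ) → ℝ} {x : Fin m → ℝ}
    (hB : ∀ i, DifferentiableAt ℝ (B i) x) (u v : Fin m → ℝ) :
    extD1 m (oneForm B) x u v =
      ∑ i, (fderiv ℝ (B i) x u * v i - fderiv ℝ (B i) x v * u i) := by
  have fderiv_eq (w : Fin m → ℝ) :
      fderiv ℝ (fun y => oneForm B y w) x = ∑ i, w i • fderiv ℝ (B i) x :=
    (HasFDerivAt.fun_sum fun i _ => (hB i).hasFDerivAt.mul_const (w i)).fderiv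
  simp only [extD1, fderiv_eq, sum_apply, smul_apply, smul_eq_mul, ← Finset.sum_sub_distrib,
    mul_comm]

lemma isForm1_oneForm {B : Fin m → (Fin m → ℝ) → ℝ} (hB : ∀ i, ContDiff ℝ ∞ (B i)) :
    IsForm1 m (oneForm B) := by
  refine ⟨fun x u₁ u₂ c => ?_, fun u => ⟨Set.univ, univ_mem, ContDiff.contDiffOn ?_⟩⟩
  · simp only [oneForm, Pi.add_apply, Pi.smul_apply, smul_eq_mul, Finset.mul_sum,
      ← Finset.sum_add_distrib]
    exact Finset.sum_congr rfl fun i _ => by ring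
  · exact ContDiff.sum fun i _ => (hB i).mul contDiff_const

lemma isForm2_extD1_oneForm {B : Fin m → (Fin m → ℝ) → ℝ} (hB : ∀ i, ContDiff ℝ ∞ (B i)) :
    IsForm2 m (extD1 m (oneForm B)) := by
  have extD1_eq (x : Fin m → ℝ) :=
    extD1_oneForm fun i => ((hB i).differentiable (by simp)).differentiableAt (x := x)
  have smooth (i : Fin m) (w : Fin m → ℝ) : ContDiff ℝ ∞ fun x => fderiv ℝ (B i) x w :=
    ((hB i).fderiv_right (by simp)).clm_apply contDiff_const
  refine ⟨fun x u₁ u₂ v c => ?_, fun x u v => by simp only [extD1, neg_sub], fun u v =>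
    ⟨Set.univ, univ_mem, ContDiff.contDiffOn ?_⟩⟩
  · simp only [extD1_eq, map_add, map_smul, Pi.add_apply, Pi.smul_apply, smul_eq_mul,
      Finset.mul_sum, ← Finset.sum_add_distrib]
    exact Finset.sum_congr rfl fun i _ => by ring
  · simp only [extD1_eq]
    exact ContDiff.sum fun i _ => ((smooth i u).mul contDiff_const).sub
      ((smooth i v).mul contDiff_const)

lemma IsForm1.exists_eventually_eq_oneForm {β : Form1 m} (hβ : IsForm1 m β) :
    ∃ B : Fin m → (Fin m → ℝ) → ℝ, (∀ i, ContDiff ℝ ∞ (B i)) ∧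
      ∀ᶠ x in 𝓝 0, β x = oneForm B x := by
  choose B hB hBβ using fun i : Fin m => exists_contDiff_eventuallyEq (hβ.2 (Pi.single i 1))
  refine ⟨B, hB, (eventually_all.2 hBβ).mono fun x hx => funext fun u => ?_⟩
  rw [eq_sum_mul_apply_single (hβ.1 x) u, oneForm]
  exact Finset.sum_congr rfl fun i _ => by rw [hx i, mul_comm]

lemma extD1_congr {β γ : Form1 m} {x : Fin m → ℝ} (h : ∀ᶠ y in 𝓝 x, β y = γ y) :
    extD1 m β x = extD1 m γ x := by
  have fderiv_eq (w : Fin m → ℝ) :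
      fderiv ℝ (fun y => β y w) x = fderiv ℝ (fun y => γ y w) x :=
    Filter.EventuallyEq.fderiv_eq (h.mono fun y hy => congrFun hy w)
  funext u v
  simp only [extD1, fderiv_eq]

end Forms

section AlgebraicRestriction

variable {m : ℕ} {f : ℝ → (Fin m → ℝ)}

/-- The values along `f` of the exact forms `dβ`, where `β` is a smooth 1-form vanishing on
`im f`. As a 2-form is only seen along `f`, it is encoded by `t ↦ ω (f t)`; its linearity and
smoothness need not be imposed. -/
def exactAlong (f : ℝ → (Fin m → ℝ)) :
    Submodule ℝ (ℝ → (Fin m → ℝ) → (Fin m → ℝ) → ℝ) where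
  carrier := {W | ∃ B : Fin m → (Fin m → ℝ) → ℝ, (∀ i, ContDiff ℝ ∞ (B i)) ∧
    (∀ i, ∀ᶠ t in 𝓝 0, B i (f t) = 0) ∧
    ∀ᶠ t in 𝓝 0, ∀ u v, W t u v =
      ∑ i, (fderiv ℝ (B i) (f t) u * v i - fderiv ℝ (B i) (f t) v * u i)}
  zero_mem' := ⟨0, fun _ => contDiff_const, fun _ => .of_forall fun _ => rfl,
    .of_forall fun _ _ _ => by simp⟩
  add_mem' := by
    rintro W W' ⟨B, hB, hBf, hW⟩ ⟨B', hB', hBf', hW'⟩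
    refine ⟨fun i x => B i x + B' i x, fun i => (hB i).add (hB' i), fun i => ?_, ?_⟩
    · filter_upwards [hBf i, hBf' i] with t h h'
      rw [h, h', add_zero]
    · filter_upwards [hW, hW'] with t h h' u v
      rw [Pi.add_apply, Pi.add_apply, Pi.add_apply, h, h', ← Finset.sum_add_distrib]
      refine Finset.sum_congr rfl fun i _ => ?_
      rw [fderiv_fun_add ((hB i).differentiable (by simp)).differentiableAt
        ((hB' i).differentiable (by simp)).differentiableAt]
      simp only [add_apply]
      ring
  smul_mem' := by
    rintro c W ⟨B, hB, hBf, hW⟩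
    refine ⟨fun i x => c * B i x, fun i => contDiff_const.mul (hB i), fun i => ?_, ?_⟩
    · filter_upwards [hBf i] with t h
      rw [h, mul_zero]
    · filter_upwards [hW] with t h u v
      rw [Pi.smul_apply, Pi.smul_apply, Pi.smul_apply, h, smul_eq_mul, Finset.mul_sum]
      refine Finset.sum_congr rfl fun i _ => ?_
      rw [fderiv_const_mul ((hB i).differentiable (by simp)).differentiableAt]
      simp only [smul_apply, smul_eq_mul]
      ring

lemma exists_apply_single_eq_of_mem_exactAlong {W : ℝ → (Fin m → ℝ) → (Fin m → ℝ) → ℝ}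
    (hW : W ∈ exactAlong f) :
    ∃ B : Fin m → (Fin m → ℝ) → ℝ, (∀ i, ContDiff ℝ ∞ (B i)) ∧
      (∀ i, ∀ᶠ t in 𝓝 0, B i (f t) = 0) ∧
      ∀ᶠ t in 𝓝 0, ∀ i j, W t (Pi.single i 1) (Pi.single j 1) =
        partialDeriv i (B j) (f t) - partialDeriv j (B i) (f t) := by
  obtain ⟨B, hB, hBf, hW⟩ := hW
  refine ⟨B, hB, hBf, hW.mono fun t ht i j => ?_⟩
  simp [ht, partialDeriv, Pi.single_apply]

/-- The space in which algebraic restrictions to `f` live: values along `f` modulo `exactAlong f`.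
Not every element comes from a smooth 2-form. -/
abbrev AlgRestr (f : ℝ → (Fin m → ℝ)) : Type :=
  (ℝ → (Fin m → ℝ) → (Fin m → ℝ) → ℝ) ⧸ exactAlong f

/-- The class in `AlgRestr f` of values along `f`. -/
def AlgRestr.mk (f : ℝ → (Fin m → ℝ)) :
    (ℝ → (Fin m → ℝ) → (Fin m → ℝ) → ℝ) →ₗ[ℝ] AlgRestr f :=
  (exactAlong f).mkQ

/-- The algebraic restriction of the 2-form `ω` to `f`. -/
def algRestr (f : ℝ → (Fin m → ℝ)) (ω : Form2 m) : AlgRestr f :=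
  AlgRestr.mk f fun t => ω (f t)

lemma AlgRestr.mk_eq_zero_iff {W : ℝ → (Fin m → ℝ) → (Fin m → ℝ) → ℝ} :
    AlgRestr.mk f W = 0 ↔ W ∈ exactAlong f :=
  Submodule.Quotient.mk_eq_zero _

lemma AlgRestr.mk_congr {W W' : ℝ → (Fin m → ℝ) → (Fin m → ℝ) → ℝ}
    (h : ∀ᶠ t in 𝓝 0, W t = W' t) : AlgRestr.mk f W = AlgRestr.mk f W' := by
  rw [← sub_eq_zero, ← map_sub, mk_eq_zero_iff]
  refine ⟨0, fun _ => contDiff_const, fun _ => .of_forall fun _ => rfl, ?_⟩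
  filter_upwards [h] with t ht u v
  simp [ht]

/-- Multiplying by `F` preserves exactness along `f`: as `β` vanishes on `im f`, so does
`F dβ - d(Fβ) = - dF ∧ β`. -/
lemma AlgRestr.mk_mul_eq_zero {F : (Fin m → ℝ) → ℝ} (hF : ContDiff ℝ ∞ F)
    {W : ℝ → (Fin m → ℝ) → (Fin m → ℝ) → ℝ} (hW : AlgRestr.mk f W = 0) :
    AlgRestr.mk f (fun t u v => F (f t) * W t u v) = 0 := by
  rw [mk_eq_zero_iff] at hW ⊢
  obtain ⟨B, hB, hBf, hW⟩ := hW
  refine ⟨fun i x => F x * B i x, fun i => hF.mul (hB i), fun i => ?_, ?_⟩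
  · filter_upwards [hBf i] with t ht
    rw [ht, mul_zero]
  · filter_upwards [hW, eventually_all.2 hBf] with t ht hBt u v
    rw [ht, Finset.mul_sum]
    refine Finset.sum_congr rfl fun i _ => ?_
    rw [fderiv_fun_mul (hF.differentiable (by simp)).differentiableAt
      ((hB i).differentiable (by simp)).differentiableAt, hBt i]
    simp only [add_apply, smul_apply, smul_eq_mul]
    ring

lemma AlgRestr.mk_fderiv_wedge_eq_zero {P : (Fin m → ℝ) → ℝ} (hP : ContDiff ℝ ∞ P)
    (hPf : ∀ᶠ t in 𝓝 0, P (f t) = 0) (k : Fin m) :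
    AlgRestr.mk f (fun t u v => fderiv ℝ P (f t) u * v k - fderiv ℝ P (f t) v * u k) = 0 := by
  rw [mk_eq_zero_iff]
  refine ⟨Pi.single k P, fun i => ?_, fun i => ?_, .of_forall fun t u v => ?_⟩
  · obtain rfl | hi := eq_or_ne i k
    · simpa using hP
    · rw [Pi.single_eq_of_ne hi]
      exact contDiff_zero_fun
  · obtain rfl | hi := eq_or_ne i k
    · simpa using hPf
    · simp [hi]
  · rw [Finset.sum_eq_single_of_mem k (Finset.mem_univ k) fun i _ hi => by simp [hi]]
    simp

lemma algRestr_sub_sum_mul {ι : Type*} [Fintype ι] (ω : Form2 m) (η : ι → Form2 m) (c : ι → ℝ) :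
    algRestr f (fun x u v => ω x u v - ∑ k, c k * η k x u v) =
      algRestr f ω - ∑ k, c k • algRestr f (η k) := by
  simp only [algRestr, ← map_smul, ← map_sum, ← map_sub]
  congr 1
  ext t u v
  simp

lemma zeroAR2_iff_algRestr_eq_zero (hf : Tendsto f (𝓝 0) (𝓝 0)) {ω : Form2 m}
    (hω : IsForm2 m ω) : ZeroAR2 m ω f ↔ algRestr f ω = 0 := by
  have differentiableAt {B : Fin m → (Fin m → ℝ) → ℝ} (hB : ∀ i, ContDiff ℝ ∞ (B i))
      (x : Fin m → ℝ) (i : Fin m) : DifferentiableAt ℝ (B i) x :=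
    ((hB i).differentiable (by simp)).differentiableAt
  rw [algRestr, AlgRestr.mk_eq_zero_iff]
  constructor
  · rintro ⟨α, β, -, hβ, hαf, hβf, hωαβ⟩
    obtain ⟨B, hB, hβB⟩ := hβ.exists_eventually_eq_oneForm
    refine ⟨B, hB, fun i => ?_, ?_⟩
    · filter_upwards [hβf, hf.eventually hβB] with t ht hβBt
      simpa [hβBt, oneForm, Pi.single_apply] using ht (Pi.single i 1)
    · filter_upwards [hαf, hf.eventually hωαβ, hf.eventually hβB.eventually_nhds]
        with t hαt hωt hβBt u v
      rw [hωt, hαt, zero_add, extD1_congr hβBt, extD1_oneForm (differentiableAt hB _)]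
  · rintro ⟨B, hB, hBf, hωB⟩
    refine ⟨fun x u v => ω x u v - extD1 m (oneForm B) x u v, oneForm B,
      hω.sub (isForm2_extD1_oneForm hB), isForm1_oneForm hB, ?_, ?_,
      .of_forall fun x u v => by ring⟩
    · filter_upwards [hωB] with t ht u v
      rw [ht, extD1_oneForm (differentiableAt hB _), sub_self]
    · filter_upwards [eventually_all.2 hBf] with t ht u
      simp [oneForm, ht]

end AlgebraicRestriction

section MonomialCurve

variable {m : ℕ} {a : Fin m → ℕ}

/-- The curve `t ↦ (t ^ a₁, …, t ^ aₘ)`. -/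
def monomialCurve (a : Fin m → ℕ) : ℝ → (Fin m → ℝ) := fun t i => t ^ a i

lemma tendsto_monomialCurve (ha : ∀ i, a i ≠ 0) : Tendsto (monomialCurve a) (𝓝 0) (𝓝 0) :=
  tendsto_pi_nhds.2 fun i => by
    simpa [ha i, monomialCurve] using (continuous_pow (M := ℝ) (a i)).tendsto 0

/-- The class of `t ^ w · dxᵢ ∧ dxⱼ`. The exponent `w` is arbitrary: it need not be attained by a
monomial along the curve. -/
def monomialWedge (a : Fin m → ℕ) (w : ℕ) (i j : Fin m) : AlgRestr (monomialCurve a) :=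
  AlgRestr.mk _ fun t u v => t ^ w * (u i * v j - u j * v i)

lemma monomialWedge_swap (w : ℕ) (i j : Fin m) :
    monomialWedge a w j i = -monomialWedge a w i j := by
  rw [monomialWedge, monomialWedge, ← map_neg]
  congr 1
  ext t u v
  simp only [Pi.neg_apply]
  ring

lemma monomialWedge_self (w : ℕ) (i : Fin m) : monomialWedge a w i i = 0 := by
  rw [monomialWedge, ← map_zero (AlgRestr.mk _)]
  congr 1
  ext t u v
  simp

lemma monomialWedge_add_eq_zero {w : ℕ} {i j : Fin m} (h : monomialWedge a w i j = 0)
    (k : Fin m) : monomialWedge a (w + a k) i j = 0 := by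
  rw [← AlgRestr.mk_mul_eq_zero (contDiff_apply ℝ ℝ k) h, monomialWedge]
  congr 1
  ext t u v
  simp only [monomialCurve]
  ring

lemma algRestr_wedge (i j : Fin m) :
    algRestr (monomialCurve a) (wedge m i j) = monomialWedge a 0 i j := by
  simp only [monomialWedge, pow_zero, one_mul]
  rfl

lemma algRestr_mwedge (l i j : Fin m) :
    algRestr (monomialCurve a) (mwedge m l i j) = monomialWedge a (a l) i j :=
  rfl

lemma fderiv_monomial_monomialCurve (n : Fin m → ℕ) (t : ℝ) (u : Fin m → ℝ) :
    fderiv ℝ (fun x => ∏ i, x i ^ n i) (monomialCurve a t) u =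
      ∑ i, n i * (t ^ (∑ j, n j * a j - a i) * u i) := by
  have hasFDerivAt_pow (i : Fin m) :=
    HasFDerivAt.pow (hasFDerivAt_apply (𝕜 := ℝ) i (monomialCurve a t)) (n i)
  rw [(HasFDerivAt.finsetProd fun i _ => hasFDerivAt_pow i).fderiv]
  simp only [sum_apply, smul_apply, smul_eq_mul]
  refine Finset.sum_congr rfl fun i hi => ?_
  obtain hni | ⟨p, hp⟩ := (em (n i = 0)).imp_right Nat.exists_eq_succ_of_ne_zero
  · simp [hni]
  have exponent_eq :
      ∑ j, n j * a j - a i = ∑ j ∈ Finset.univ.erase i, n j * a j + p * a i := by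
    rw [← Finset.sum_erase_add _ _ hi, hp, Nat.succ_mul, ← add_assoc, Nat.add_sub_cancel]
  rw [exponent_eq, hp]
  simp only [monomialCurve, ← pow_mul, Finset.prod_pow_eq_pow_sum, pow_add, mul_comm (a _),
    Nat.succ_sub_one, nsmul_eq_mul, ContinuousLinearMap.proj_apply]
  ring

/-- Differentiate the difference of the monomials `x ^ n` and `x ^ n'`, both equal to `t ^ s` along
the curve. -/
lemma sum_smul_monomialWedge_eq {n n' : Fin m → ℕ} {s : ℕ} (hn : ∑ i, n i * a i = s)
    (hn' : ∑ i, n' i * a i = s) (k : Fin m) :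
    ∑ i, (n i : ℝ) • monomialWedge a (s - a i) i k =
      ∑ i, (n' i : ℝ) • monomialWedge a (s - a i) i k := by
  let monomial (n : Fin m → ℕ) (x : Fin m → ℝ) : ℝ := ∏ i, x i ^ n i
  have contDiff_monomial (n : Fin m → ℕ) : ContDiff ℝ ∞ (monomial n) :=
    contDiff_prod fun i _ => (contDiff_apply ℝ ℝ i).pow (n i)
  have monomial_curve (n : Fin m → ℕ) (t : ℝ) :
      monomial n (monomialCurve a t) = t ^ ∑ i, n i * a i := by
    simp only [monomial, monomialCurve, ← pow_mul, Finset.prod_pow_eq_pow_sum, mul_comm]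
  rw [← sub_eq_zero, ← AlgRestr.mk_fderiv_wedge_eq_zero (f := monomialCurve a)
    (P := fun x => monomial n x - monomial n' x) ((contDiff_monomial n).sub (contDiff_monomial n'))
    (.of_forall fun t => by rw [monomial_curve, monomial_curve, hn, hn', sub_self]) k]
  simp only [monomialWedge, ← map_smul, ← map_sum, ← map_sub]
  congr 1
  ext t u v
  have fderiv_eq (w : Fin m → ℝ) :
      fderiv ℝ (fun x => monomial n x - monomial n' x) (monomialCurve a t) w =
        ∑ i, n i * (t ^ (s - a i) * w i) - ∑ i, n' i * (t ^ (s - a i) * w i) := by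
    rw [fderiv_fun_sub ((contDiff_monomial n).differentiable (by simp)).differentiableAt
      ((contDiff_monomial n').differentiable (by simp)).differentiableAt, sub_apply,
      fderiv_monomial_monomialCurve, fderiv_monomial_monomialCurve, hn, hn']
  simp only [fderiv_eq, Pi.sub_apply, Finset.sum_apply, Pi.smul_apply, smul_eq_mul, sub_mul,
    Finset.sum_mul, ← Finset.sum_sub_distrib]
  exact Finset.sum_congr rfl fun i _ => by ring

lemma mk_coeff_mul_eq_jet (ha : ∀ i, a i ≠ 0) {F : (Fin m → ℝ) → ℝ}
    (hF : ∃ U ∈ 𝓝 (0 : Fin m → ℝ), ContDiffOn ℝ ∞ F U) {i j : Fin m}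
    (h_quad : ∀ k l, monomialWedge a (a k + a l) i j = 0) :
    AlgRestr.mk (monomialCurve a) (fun t u v => F (monomialCurve a t) * (u i * v j - u j * v i)) =
      F 0 • monomialWedge a 0 i j + ∑ k, partialDeriv k F 0 • monomialWedge a (a k) i j := by
  obtain ⟨G, hG, hGF⟩ := exists_contDiff_eventuallyEq hF
  obtain ⟨Q, hQ, hGQ⟩ := exists_eq_taylor_one_add_sum_mul_mul hG
  have remainder_eq_zero : ∑ k, ∑ l, AlgRestr.mk (monomialCurve a) (fun t u v =>
      Q k l (monomialCurve a t) * (t ^ (a k + a l) * (u i * v j - u j * v i))) = 0 :=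
    Finset.sum_eq_zero fun k _ => Finset.sum_eq_zero fun l _ =>
      AlgRestr.mk_mul_eq_zero (hQ k l) (h_quad k l)
  have partialDeriv_eq (k : Fin m) : partialDeriv k F 0 = partialDeriv k G 0 := by
    rw [partialDeriv, partialDeriv, hGF.fderiv_eq]
  rw [← add_zero (_ + _), ← remainder_eq_zero]
  simp only [monomialWedge, ← map_smul, ← map_sum, ← map_add]
  refine AlgRestr.mk_congr ?_
  filter_upwards [(tendsto_monomialCurve ha).eventually hGF] with t ht
  ext u v
  rw [← ht, hGQ, hGF.eq_of_nhds]
  simp only [partialDeriv_eq, Pi.add_apply, Finset.sum_apply, Pi.smul_apply, smul_eq_mul, add_mul,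
    Finset.sum_mul, monomialCurve, pow_zero, one_mul]
  congr 1
  · congr 1
    exact Finset.sum_congr rfl fun k _ => by ring
  · exact Finset.sum_congr rfl fun k _ => Finset.sum_congr rfl fun l _ => by ring

lemma IsForm2.algRestr_eq_jet (ha : ∀ i, a i ≠ 0) {ω : Form2 m} (hω : IsForm2 m ω)
    (h_quad : ∀ k l i j, monomialWedge a (a k + a l) i j = 0) :
    algRestr (monomialCurve a) ω = ∑ i, ∑ j ∈ Finset.Ioi i,
      (ω 0 (Pi.single i 1) (Pi.single j 1) • monomialWedge a 0 i j +
        ∑ k, partialDeriv k (fun x => ω x (Pi.single i 1) (Pi.single j 1)) 0 •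
          monomialWedge a (a k) i j) := by
  simp only [← mk_coeff_mul_eq_jet ha (hω.2.2 (Pi.single _ 1) (Pi.single _ 1))
    fun k l => h_quad k l _ _, ← map_sum, algRestr]
  congr 1
  ext t u v
  simp only [Finset.sum_apply]
  exact hω.eq_sum _ u v

end MonomialCurve

section Relations

local notation "𝓔" => monomialWedge (![4, 5, 6, 7] : Fin 4 → ℕ)

lemma monomial_relation (n n' : Fin 4 → ℕ) {s : ℕ} (k : Fin 4)
    (hn : n 0 * 4 + n 1 * 5 + n 2 * 6 + n 3 * 7 = s)
    (hn' : n' 0 * 4 + n' 1 * 5 + n' 2 * 6 + n' 3 * 7 = s) :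
    (n 0 : ℝ) • 𝓔 (s - 4) 0 k + (n 1 : ℝ) • 𝓔 (s - 5) 1 k + (n 2 : ℝ) • 𝓔 (s - 6) 2 k +
        (n 3 : ℝ) • 𝓔 (s - 7) 3 k =
      (n' 0 : ℝ) • 𝓔 (s - 4) 0 k + (n' 1 : ℝ) • 𝓔 (s - 5) 1 k + (n' 2 : ℝ) • 𝓔 (s - 6) 2 k +
        (n' 3 : ℝ) • 𝓔 (s - 7) 3 k := by
  simpa [Fin.sum_univ_four] using sum_smul_monomialWedge_eq (a := ![4, 5, 6, 7])
    (by simpa [Fin.sum_univ_four] using hn) (by simpa [Fin.sum_univ_four] using hn') k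

lemma monomial_relation_dx0 (n n' : Fin 4 → ℕ) {s : ℕ}
    (hn : n 0 * 4 + n 1 * 5 + n 2 * 6 + n 3 * 7 = s := by decide)
    (hn' : n' 0 * 4 + n' 1 * 5 + n' 2 * 6 + n' 3 * 7 = s := by decide) :
    (n 1 : ℝ) • 𝓔 (s - 5) 0 1 + (n 2 : ℝ) • 𝓔 (s - 6) 0 2 + (n 3 : ℝ) • 𝓔 (s - 7) 0 3 =
      (n' 1 : ℝ) • 𝓔 (s - 5) 0 1 + (n' 2 : ℝ) • 𝓔 (s - 6) 0 2 +
        (n' 3 : ℝ) • 𝓔 (s - 7) 0 3 := by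
  have h := monomial_relation n n' 0 hn hn'
  simp only [monomialWedge_self, monomialWedge_swap _ 0 1, monomialWedge_swap _ 0 2,
    monomialWedge_swap _ 0 3] at h
  linear_combination (norm := module) -h

lemma monomial_relation_dx1 (n n' : Fin 4 → ℕ) {s : ℕ}
    (hn : n 0 * 4 + n 1 * 5 + n 2 * 6 + n 3 * 7 = s := by decide)
    (hn' : n' 0 * 4 + n' 1 * 5 + n' 2 * 6 + n' 3 * 7 = s := by decide) :
    (n 0 : ℝ) • 𝓔 (s - 4) 0 1 - (n 2 : ℝ) • 𝓔 (s - 6) 1 2 - (n 3 : ℝ) • 𝓔 (s - 7) 1 3 =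
      (n' 0 : ℝ) • 𝓔 (s - 4) 0 1 - (n' 2 : ℝ) • 𝓔 (s - 6) 1 2 -
        (n' 3 : ℝ) • 𝓔 (s - 7) 1 3 := by
  have h := monomial_relation n n' 1 hn hn'
  simp only [monomialWedge_self, monomialWedge_swap _ 1 2, monomialWedge_swap _ 1 3] at h
  linear_combination (norm := module) h

lemma monomial_relation_dx2 (n n' : Fin 4 → ℕ) {s : ℕ}
    (hn : n 0 * 4 + n 1 * 5 + n 2 * 6 + n 3 * 7 = s := by decide)
    (hn' : n' 0 * 4 + n' 1 * 5 + n' 2 * 6 + n' 3 * 7 = s := by decide) :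
    (n 0 : ℝ) • 𝓔 (s - 4) 0 2 + (n 1 : ℝ) • 𝓔 (s - 5) 1 2 - (n 3 : ℝ) • 𝓔 (s - 7) 2 3 =
      (n' 0 : ℝ) • 𝓔 (s - 4) 0 2 + (n' 1 : ℝ) • 𝓔 (s - 5) 1 2 -
        (n' 3 : ℝ) • 𝓔 (s - 7) 2 3 := by
  have h := monomial_relation n n' 2 hn hn'
  simp only [monomialWedge_self, monomialWedge_swap _ 2 3] at h
  linear_combination (norm := module) h

lemma monomial_relation_dx3 (n n' : Fin 4 → ℕ) {s : ℕ}
    (hn : n 0 * 4 + n 1 * 5 + n 2 * 6 + n 3 * 7 = s := by decide)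
    (hn' : n' 0 * 4 + n' 1 * 5 + n' 2 * 6 + n' 3 * 7 = s := by decide) :
    (n 0 : ℝ) • 𝓔 (s - 4) 0 3 + (n 1 : ℝ) • 𝓔 (s - 5) 1 3 + (n 2 : ℝ) • 𝓔 (s - 6) 2 3 =
      (n' 0 : ℝ) • 𝓔 (s - 4) 0 3 + (n' 1 : ℝ) • 𝓔 (s - 5) 1 3 +
        (n' 2 : ℝ) • 𝓔 (s - 6) 2 3 := by
  have h := monomial_relation n n' 3 hn hn'
  simp only [monomialWedge_self] at h
  linear_combination (norm := module) h

lemma monomialWedge_weight_14 : 𝓔 4 0 2 = (2 : ℝ) • 𝓔 5 0 1 := by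
  simpa using monomial_relation_dx0 ![1, 0, 1, 0] ![0, 2, 0, 0] (s := 10)

lemma monomialWedge_weight_15 : 𝓔 4 1 2 = 𝓔 6 0 1 ∧ 𝓔 4 0 3 = 𝓔 6 0 1 + 𝓔 5 0 2 := by
  have x0x2 : 𝓔 6 0 1 - 𝓔 4 1 2 = 0 := by
    simpa using monomial_relation_dx1 ![1, 0, 1, 0] ![0, 2, 0, 0] (s := 10)
  have x0x3 : 𝓔 4 0 3 = 𝓔 6 0 1 + 𝓔 5 0 2 := by
    simpa using monomial_relation_dx0 ![1, 0, 0, 1] ![0, 1, 1, 0] (s := 11)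
  exact ⟨(sub_eq_zero.1 x0x2).symm, x0x3⟩

lemma monomialWedge_weight_16 :
    𝓔 6 0 2 = 0 ∧ 𝓔 5 1 2 = 0 ∧ 𝓔 4 1 3 = 𝓔 7 0 1 ∧ 𝓔 7 0 1 = -𝓔 5 0 3 := by
  have dx2 : 𝓔 6 0 2 = (2 : ℝ) • 𝓔 5 1 2 := by
    simpa using monomial_relation_dx2 ![1, 0, 1, 0] ![0, 2, 0, 0] (s := 10)
  have dx1 : 𝓔 7 0 1 - 𝓔 4 1 3 = -𝓔 5 1 2 := by
    simpa using monomial_relation_dx1 ![1, 0, 0, 1] ![0, 1, 1, 0] (s := 11)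
  have dx0 : 0 = 𝓔 7 0 1 + 𝓔 5 0 3 := by
    simpa using monomial_relation_dx0 ![3, 0, 0, 0] ![0, 1, 0, 1] (s := 12)
  have dx0' : 0 = (2 : ℝ) • 𝓔 6 0 2 := by
    simpa using monomial_relation_dx0 ![3, 0, 0, 0] ![0, 0, 2, 0] (s := 12)
  have e02 : 𝓔 6 0 2 = 0 := by linear_combination (norm := module) (-1 / 2 : ℝ) • dx0'
  have e12 : 𝓔 5 1 2 = 0 := by linear_combination (norm := module) (1 / 2 : ℝ) • (e02 - dx2)
  refine ⟨e02, e12, ?_, ?_⟩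
  · linear_combination (norm := module) e12 - dx1
  · linear_combination (norm := module) -dx0

lemma monomialWedge_weight_17 :
    𝓔 8 0 1 = 0 ∧ 𝓔 6 1 2 = 0 ∧ 𝓔 5 1 3 = 0 ∧ 𝓔 7 0 2 = 𝓔 4 2 3 ∧ 𝓔 6 0 3 = -𝓔 4 2 3 := by
  have dx3 : 𝓔 6 0 3 + 𝓔 4 2 3 = (2 : ℝ) • 𝓔 5 1 3 := by
    simpa using monomial_relation_dx3 ![1, 0, 1, 0] ![0, 2, 0, 0] (s := 10)
  have dx2 : 𝓔 7 0 2 - 𝓔 4 2 3 = 𝓔 6 1 2 := by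
    simpa using monomial_relation_dx2 ![1, 0, 0, 1] ![0, 1, 1, 0] (s := 11)
  have dx1 : (3 : ℝ) • 𝓔 8 0 1 = -𝓔 5 1 3 := by
    simpa using monomial_relation_dx1 ![3, 0, 0, 0] ![0, 1, 0, 1] (s := 12)
  have dx1' : (3 : ℝ) • 𝓔 8 0 1 = -((2 : ℝ) • 𝓔 6 1 2) := by
    simpa using monomial_relation_dx1 ![3, 0, 0, 0] ![0, 0, 2, 0] (s := 12)
  have dx0 : 𝓔 8 0 1 = 𝓔 7 0 2 + 𝓔 6 0 3 := by
    simpa using monomial_relation_dx0 ![2, 1, 0, 0] ![0, 0, 1, 1] (s := 13)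
  have e13 : 𝓔 5 1 3 = (-3 : ℝ) • 𝓔 8 0 1 := by linear_combination (norm := module) dx1
  have e12 : 𝓔 6 1 2 = (-3 / 2 : ℝ) • 𝓔 8 0 1 := by
    linear_combination (norm := module) (1 / 2 : ℝ) • dx1'
  have e01 : 𝓔 8 0 1 = 0 := by
    linear_combination (norm := module) (2 / 17 : ℝ) • (dx0 + dx2 + dx3 + e12 + (2 : ℝ) • e13)
  rw [e01, smul_zero] at e12 e13
  refine ⟨e01, e12, e13, ?_, ?_⟩
  · linear_combination (norm := module) dx2 + e12
  · linear_combination (norm := module) dx3 + (2 : ℝ) • e13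

lemma monomialWedge_weight_18 :
    𝓔 9 0 1 = 0 ∧ 𝓔 8 0 2 = 0 ∧ 𝓔 7 0 3 = 0 ∧ 𝓔 7 1 2 = 𝓔 5 2 3 ∧ 𝓔 6 1 3 = -𝓔 5 2 3 := by
  have dx3 : 𝓔 7 0 3 = 𝓔 6 1 3 + 𝓔 5 2 3 := by
    simpa using monomial_relation_dx3 ![1, 0, 0, 1] ![0, 1, 1, 0] (s := 11)
  have dx2 : (3 : ℝ) • 𝓔 8 0 2 = 𝓔 7 1 2 - 𝓔 5 2 3 := by
    simpa using monomial_relation_dx2 ![3, 0, 0, 0] ![0, 1, 0, 1] (s := 12)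
  have e02 : 𝓔 8 0 2 = 0 := by
    simpa using monomial_relation_dx2 ![3, 0, 0, 0] ![0, 0, 2, 0] (s := 12)
  have dx1 : (2 : ℝ) • 𝓔 9 0 1 = -𝓔 7 1 2 - 𝓔 6 1 3 := by
    simpa using monomial_relation_dx1 ![2, 1, 0, 0] ![0, 0, 1, 1] (s := 13)
  have dx0 : 𝓔 8 0 2 = (2 : ℝ) • 𝓔 7 0 3 := by
    simpa using monomial_relation_dx0 ![2, 0, 1, 0] ![0, 0, 0, 2] (s := 14)
  have e03 : 𝓔 7 0 3 = 0 := by linear_combination (norm := module) (1 / 2 : ℝ) • (e02 - dx0)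
  have e12 : 𝓔 7 1 2 = 𝓔 5 2 3 := by linear_combination (norm := module) (3 : ℝ) • e02 - dx2
  have e13 : 𝓔 6 1 3 = -𝓔 5 2 3 := by linear_combination (norm := module) e03 - dx3
  refine ⟨?_, e02, e03, e12, e13⟩
  linear_combination (norm := module) (1 / 2 : ℝ) • (dx1 - e12 - e13)

lemma monomialWedge_weight_19 :
    𝓔 10 0 1 = 0 ∧ 𝓔 9 0 2 = 0 ∧ 𝓔 8 0 3 = 0 ∧ 𝓔 8 1 2 = 0 ∧ 𝓔 7 1 3 = 0 ∧ 𝓔 6 2 3 = 0 := by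
  have dx3 : (3 : ℝ) • 𝓔 8 0 3 = 𝓔 7 1 3 := by
    simpa using monomial_relation_dx3 ![3, 0, 0, 0] ![0, 1, 0, 1] (s := 12)
  have dx3' : (3 : ℝ) • 𝓔 8 0 3 = (2 : ℝ) • 𝓔 6 2 3 := by
    simpa using monomial_relation_dx3 ![3, 0, 0, 0] ![0, 0, 2, 0] (s := 12)
  have dx2 : (2 : ℝ) • 𝓔 9 0 2 + 𝓔 8 1 2 = -𝓔 6 2 3 := by
    simpa using monomial_relation_dx2 ![2, 1, 0, 0] ![0, 0, 1, 1] (s := 13)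
  have dx1 : (2 : ℝ) • 𝓔 10 0 1 - 𝓔 8 1 2 = -((2 : ℝ) • 𝓔 7 1 3) := by
    simpa using monomial_relation_dx1 ![2, 0, 1, 0] ![0, 0, 0, 2] (s := 14)
  have dx1' : 𝓔 10 0 1 = -((2 : ℝ) • 𝓔 7 1 3) := by
    simpa using monomial_relation_dx1 ![1, 2, 0, 0] ![0, 0, 0, 2] (s := 14)
  have dx0 : 𝓔 8 0 3 = 𝓔 10 0 1 + 𝓔 9 0 2 := by
    simpa using monomial_relation_dx0 ![2, 0, 0, 1] ![1, 1, 1, 0] (s := 15)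
  have e13 : 𝓔 7 1 3 = (3 : ℝ) • 𝓔 8 0 3 := dx3.symm
  have e23 : 𝓔 6 2 3 = (3 / 2 : ℝ) • 𝓔 8 0 3 := by
    linear_combination (norm := module) (-1 / 2 : ℝ) • dx3'
  have e01 : 𝓔 10 0 1 = (-6 : ℝ) • 𝓔 8 0 3 := by
    linear_combination (norm := module) dx1' - (2 : ℝ) • e13
  have e12 : 𝓔 8 1 2 = (-6 : ℝ) • 𝓔 8 0 3 := by
    linear_combination (norm := module) (2 : ℝ) • e01 + (2 : ℝ) • e13 - dx1
  have e02 : 𝓔 9 0 2 = (9 / 4 : ℝ) • 𝓔 8 0 3 := by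
    linear_combination (norm := module) (1 / 2 : ℝ) • (dx2 - e12 - e23)
  have e03 : 𝓔 8 0 3 = 0 := by
    linear_combination (norm := module) (4 / 19 : ℝ) • (dx0 + e01 + e02)
  rw [e03, smul_zero] at e01 e02 e12 e13 e23
  exact ⟨e01, e02, e03, e12, e13, e23⟩

lemma monomialWedge_weight_20 :
    𝓔 11 0 1 = 0 ∧ 𝓔 10 0 2 = 0 ∧ 𝓔 9 0 3 = 0 ∧ 𝓔 9 1 2 = 0 ∧ 𝓔 8 1 3 = 0 ∧ 𝓔 7 2 3 = 0 := by
  have dx3 : (2 : ℝ) • 𝓔 9 0 3 + 𝓔 8 1 3 = 𝓔 7 2 3 := by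
    simpa using monomial_relation_dx3 ![2, 1, 0, 0] ![0, 0, 1, 1] (s := 13)
  have dx2 : (2 : ℝ) • 𝓔 10 0 2 = -((2 : ℝ) • 𝓔 7 2 3) := by
    simpa using monomial_relation_dx2 ![2, 0, 1, 0] ![0, 0, 0, 2] (s := 14)
  have dx2' : 𝓔 10 0 2 + (2 : ℝ) • 𝓔 9 1 2 = -((2 : ℝ) • 𝓔 7 2 3) := by
    simpa using monomial_relation_dx2 ![1, 2, 0, 0] ![0, 0, 0, 2] (s := 14)
  have dx1 : (2 : ℝ) • 𝓔 11 0 1 - 𝓔 8 1 3 = 𝓔 11 0 1 - 𝓔 9 1 2 := by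
    simpa using monomial_relation_dx1 ![2, 0, 0, 1] ![1, 1, 1, 0] (s := 15)
  have dx1' : (2 : ℝ) • 𝓔 11 0 1 - 𝓔 8 1 3 = 0 := by
    simpa using monomial_relation_dx1 ![2, 0, 0, 1] ![0, 3, 0, 0] (s := 15)
  have dx0 : 0 = 𝓔 11 0 1 + 𝓔 9 0 3 := by
    simpa using monomial_relation_dx0 ![4, 0, 0, 0] ![1, 1, 0, 1] (s := 16)
  have e23 : 𝓔 7 2 3 = 0 := by
    linear_combination (norm := module) -dx3 - (2 : ℝ) • dx0 - dx1'
  rw [e23, smul_zero, neg_zero] at dx2 dx2'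
  have e02 : 𝓔 10 0 2 = 0 := by linear_combination (norm := module) (1 / 2 : ℝ) • dx2
  have e12 : 𝓔 9 1 2 = 0 := by linear_combination (norm := module) (1 / 2 : ℝ) • (dx2' - e02)
  have e01 : 𝓔 11 0 1 = 0 := by linear_combination (norm := module) dx1' - dx1 + e12
  refine ⟨e01, e02, ?_, e12, ?_, e23⟩
  · linear_combination (norm := module) -dx0 - e01
  · linear_combination (norm := module) (2 : ℝ) • e01 - dx1'

lemma monomialWedge_weight_21 :
    𝓔 11 0 2 = 0 ∧ 𝓔 10 0 3 = 0 ∧ 𝓔 10 1 2 = 0 ∧ 𝓔 9 1 3 = 0 ∧ 𝓔 8 2 3 = 0 := by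
  have e01 : 𝓔 12 0 1 = 0 := monomialWedge_add_eq_zero monomialWedge_weight_17.1 0
  have e02 : 𝓔 11 0 2 = 0 := monomialWedge_add_eq_zero monomialWedge_weight_16.1 1
  have e12 : 𝓔 10 1 2 = 0 := monomialWedge_add_eq_zero monomialWedge_weight_17.2.1 0
  have e13 : 𝓔 9 1 3 = 0 := monomialWedge_add_eq_zero monomialWedge_weight_17.2.2.1 0
  have e03 : 𝓔 10 0 3 = 0 := by
    simpa [e01, e02] using (monomial_relation_dx0 ![3, 1, 0, 0] ![1, 0, 1, 1] (s := 17)).symm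
  have e23 : 𝓔 8 2 3 = 0 := by
    simpa [e03] using monomial_relation_dx3 ![2, 0, 1, 0] ![0, 0, 0, 2] (s := 14)
  exact ⟨e02, e03, e12, e13, e23⟩

lemma monomialWedge_weight_22 :
    𝓔 11 0 3 = 0 ∧ 𝓔 11 1 2 = 0 ∧ 𝓔 10 1 3 = 0 ∧ 𝓔 9 2 3 = 0 := by
  have e03 : 𝓔 11 0 3 = 0 := monomialWedge_add_eq_zero monomialWedge_weight_18.2.2.1 0
  have e12 : 𝓔 11 1 2 = 0 := monomialWedge_add_eq_zero monomialWedge_weight_17.2.1 1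
  have e13 : 𝓔 10 1 3 = 0 := monomialWedge_add_eq_zero monomialWedge_weight_17.2.2.1 1
  have e23 : 𝓔 9 2 3 = 0 := by
    simpa [e03, e13] using (monomial_relation_dx3 ![2, 0, 0, 1] ![1, 1, 1, 0] (s := 15)).symm
  exact ⟨e03, e12, e13, e23⟩

lemma monomialWedge_eq_zero_of_lt_twelve {w : ℕ} (h8 : 8 ≤ w) (h12 : w < 12) {i j : Fin 4}
    (hij : i < j) : 𝓔 w i j = 0 := by
  obtain ⟨e8_01, -⟩ := monomialWedge_weight_17
  obtain ⟨e9_01, e8_02, -⟩ := monomialWedge_weight_18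
  obtain ⟨e10_01, e9_02, e8_03, e8_12, e7_13, e6_23⟩ := monomialWedge_weight_19
  obtain ⟨e11_01, e10_02, e9_03, e9_12, e8_13, e7_23⟩ := monomialWedge_weight_20
  obtain ⟨e11_02, e10_03, e10_12, e9_13, e8_23⟩ := monomialWedge_weight_21
  obtain ⟨e11_03, e11_12, e10_13, e9_23⟩ := monomialWedge_weight_22
  have e10_23 : 𝓔 10 2 3 = 0 := monomialWedge_add_eq_zero e6_23 0
  have e11_13 : 𝓔 11 1 3 = 0 := monomialWedge_add_eq_zero e7_13 0
  have e11_23 : 𝓔 11 2 3 = 0 := monomialWedge_add_eq_zero e7_23 0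
  interval_cases w <;> fin_cases i <;> fin_cases j <;> first | contradiction | assumption

lemma monomialWedge_eq_zero_of_eight_le {w : ℕ} (hw : 8 ≤ w) (i j : Fin 4) : 𝓔 w i j = 0 := by
  induction w using Nat.strong_induction_on with
  | _ w ih =>
  obtain h12 | h12 := lt_or_ge w 12
  · obtain hij | rfl | hji := lt_trichotomy i j
    · exact monomialWedge_eq_zero_of_lt_twelve hw h12 hij
    · exact monomialWedge_self w i
    · rw [monomialWedge_swap w j i, monomialWedge_eq_zero_of_lt_twelve hw h12 hji, neg_zero]
  · simpa [show w - 4 + 4 = w by lia] using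
      monomialWedge_add_eq_zero (ih (w - 4) (by lia) (by lia)) 0

end Relations

section Span

local notation "𝓔" => monomialWedge (![4, 5, 6, 7] : Fin 4 → ℕ)

lemma algRestr_basis4567 :
    (fun k => algRestr (monomialCurve ![4, 5, 6, 7]) (basis4567 k)) =
      ![𝓔 0 0 1, 𝓔 0 0 2, 𝓔 0 1 2, 𝓔 0 0 3, 𝓔 0 1 3, 𝓔 0 2 3, 𝓔 4 0 1, 𝓔 4 0 2, 𝓔 4 0 3] := by
  funext k
  fin_cases k <;> simp only [basis4567] <;>
    first | exact algRestr_wedge _ _ | exact algRestr_mwedge _ _ _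

lemma four_le_exponent (i : Fin 4) : 4 ≤ (![4, 5, 6, 7] : Fin 4 → ℕ) i := by
  fin_cases i <;> simp

lemma partialDeriv_coeff_eq_add_of_extD2_eq_zero {m : ℕ} {ω : Form2 m} {x : Fin m → ℝ}
    (hω : ∀ u v w, extD2 m ω x u v w = 0) (i j k : Fin m) :
    partialDeriv j (fun y => ω y (Pi.single i 1) (Pi.single k 1)) x =
      partialDeriv i (fun y => ω y (Pi.single j 1) (Pi.single k 1)) x +
        partialDeriv k (fun y => ω y (Pi.single i 1) (Pi.single j 1)) x := by
  have h := hω (Pi.single i 1) (Pi.single j 1) (Pi.single k 1)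
  simp only [extD2, ← partialDeriv.eq_1] at h
  linear_combination -h

lemma sum_sum_Ioi_fin_four {M : Type*} [AddCommMonoid M] (g : Fin 4 → Fin 4 → M) :
    ∑ i, ∑ j ∈ Finset.Ioi i, g i j = g 0 1 + g 0 2 + g 0 3 + (g 1 2 + g 1 3) + g 2 3 := by
  have Ioi_zero : Finset.Ioi (0 : Fin 4) = {1, 2, 3} := by decide
  have Ioi_one : Finset.Ioi (1 : Fin 4) = {2, 3} := by decide
  have Ioi_two : Finset.Ioi (2 : Fin 4) = {3} := by decide
  have Ioi_three : Finset.Ioi (3 : Fin 4) = ∅ := by decide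
  simp [Fin.sum_univ_four, Ioi_zero, Ioi_one, Ioi_two, Ioi_three, add_assoc]

lemma sum_jet_smul_monomialWedge {L : Fin 4 → Fin 4 → Fin 4 → ℝ}
    (hL : ∀ i j k, L i k j = L j k i + L i j k) :
    ∑ i, ∑ j ∈ Finset.Ioi i, ∑ k, L i j k • 𝓔 (![4, 5, 6, 7] k) i j =
      L 0 1 0 • 𝓔 4 0 1 + (L 0 2 0 + 1 / 2 * L 0 1 1) • 𝓔 4 0 2 +
        (L 0 2 1 + L 0 3 0) • 𝓔 4 0 3 := by
  have weight_14 : L 0 1 1 • 𝓔 5 0 1 = (1 / 2 * L 0 1 1) • 𝓔 4 0 2 := by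
    rw [monomialWedge_weight_14]
    module
  have weight_15 : L 0 1 2 • 𝓔 6 0 1 + L 0 2 1 • 𝓔 5 0 2 + L 1 2 0 • 𝓔 4 1 2 =
      L 0 2 1 • 𝓔 4 0 3 := by
    obtain ⟨e12, e03⟩ := monomialWedge_weight_15
    rw [hL 0 1 2, e12, e03]
    module
  have weight_16 : L 0 1 3 • 𝓔 7 0 1 + L 0 2 2 • 𝓔 6 0 2 + L 0 3 1 • 𝓔 5 0 3 +
      L 1 2 1 • 𝓔 5 1 2 + L 1 3 0 • 𝓔 4 1 3 = 0 := by
    obtain ⟨e02, e12, e13, e01⟩ := monomialWedge_weight_16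
    rw [hL 0 1 3, e13, e01, e02, e12]
    module
  have weight_17 : L 0 2 3 • 𝓔 7 0 2 + L 0 3 2 • 𝓔 6 0 3 + L 1 2 2 • 𝓔 6 1 2 +
      L 1 3 1 • 𝓔 5 1 3 + L 2 3 0 • 𝓔 4 2 3 = 0 := by
    obtain ⟨-, e12, e13, e02, e03⟩ := monomialWedge_weight_17
    rw [hL 0 2 3, e02, e03, e12, e13]
    module
  have weight_18 : L 0 3 3 • 𝓔 7 0 3 + L 1 2 3 • 𝓔 7 1 2 + L 1 3 2 • 𝓔 6 1 3 +
      L 2 3 1 • 𝓔 5 2 3 = 0 := by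
    obtain ⟨-, -, e03, e12, e13⟩ := monomialWedge_weight_18
    rw [hL 1 2 3, e03, e12, e13]
    module
  obtain ⟨-, -, -, -, e7_13, e6_23⟩ := monomialWedge_weight_19
  obtain ⟨-, -, -, -, -, e7_23⟩ := monomialWedge_weight_20
  rw [sum_sum_Ioi_fin_four]
  simp only [Fin.sum_univ_four, Matrix.cons_val, e7_13, e6_23, e7_23]
  linear_combination (norm := module) weight_14 + weight_15 + weight_16 + weight_17 + weight_18

lemma exists_algRestr_eq_sum_basis4567 {ω : Form2 4} (hω : IsForm2 4 ω)
    (hdω : ∀ u v w, extD2 4 ω 0 u v w = 0) :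
    ∃ c : Fin 9 → ℝ, algRestr (monomialCurve ![4, 5, 6, 7]) ω =
      ∑ k, c k • algRestr (monomialCurve ![4, 5, 6, 7]) (basis4567 k) := by
  let A (i j : Fin 4) : ℝ := ω 0 (Pi.single i 1) (Pi.single j 1)
  let L (i j k : Fin 4) : ℝ := partialDeriv k (fun x => ω x (Pi.single i 1) (Pi.single j 1)) 0
  have hL (i j k : Fin 4) : L i k j = L j k i + L i j k :=
    partialDeriv_coeff_eq_add_of_extD2_eq_zero hdω i j k
  have jet : algRestr (monomialCurve ![4, 5, 6, 7]) ω = ∑ i, ∑ j ∈ Finset.Ioi i,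
      (A i j • 𝓔 0 i j + ∑ k, L i j k • 𝓔 (![4, 5, 6, 7] k) i j) :=
    hω.algRestr_eq_jet (fun i => (four_pos.trans_le (four_le_exponent i)).ne') fun k l i j =>
      monomialWedge_eq_zero_of_eight_le (add_le_add (four_le_exponent k) (four_le_exponent l)) i j
  refine ⟨![A 0 1, A 0 2, A 1 2, A 0 3, A 1 3, A 2 3,
    L 0 1 0, L 0 2 0 + 1 / 2 * L 0 1 1, L 0 2 1 + L 0 3 0], ?_⟩
  simp only [jet, Finset.sum_add_distrib, sum_jet_smul_monomialWedge hL, sum_sum_Ioi_fin_four,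
    funext_iff.1 algRestr_basis4567, Fin.sum_univ_castSucc (n := 8), Fin.sum_univ_eight]
  simp only [Matrix.cons_val, Fin.reduceCastSucc, Fin.reduceLast]
  module

end Span

section LinearIndependence

open Asymptotics Polynomial

lemma X_pow_dvd_of_isBigO {p : ℝ[X]} {n : ℕ}
    (hp : (fun t => p.eval t) =O[𝓝[≠] 0] fun t => t ^ n) : X ^ n ∣ p := by
  induction n generalizing p with
  | zero => simp
  | succ n ih =>
    have tendsto_pow : Tendsto (fun t : ℝ => t ^ (n + 1)) (𝓝[≠] 0) (𝓝 0) :=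
      tendsto_nhdsWithin_of_tendsto_nhds (by simpa using (continuous_pow (n + 1)).tendsto (0 : ℝ))
    have root : p.eval 0 = 0 := tendsto_nhds_unique
      (tendsto_nhdsWithin_of_tendsto_nhds p.continuous.continuousAt) (hp.trans_tendsto tendsto_pow)
    rw [← coeff_zero_eq_eval_zero, ← X_dvd_iff] at root
    obtain ⟨q, rfl⟩ := root
    rw [pow_succ']
    refine mul_dvd_mul_left X (ih ?_)
    obtain ⟨C, hC⟩ := hp.bound
    refine .of_bound C ?_
    filter_upwards [hC, self_mem_nhdsWithin] with t ht ht0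
    rw [eval_mul, eval_X, pow_succ', norm_mul, norm_mul, mul_left_comm] at ht
    exact le_of_mul_le_mul_left ht (norm_pos_iff.2 ht0)

lemma coeff_eq_zero_of_isBigO {p : ℝ[X]} {n : ℕ}
    (hp : (fun t => p.eval t) =O[𝓝 0] fun t => t ^ n) {i : ℕ} (hi : i < n) : p.coeff i = 0 :=
  X_pow_dvd_iff.1 (X_pow_dvd_of_isBigO (hp.mono nhdsWithin_le_nhds)) i hi

variable {m : ℕ}

lemma isBigO_comp_sub_taylor_one {F : (Fin m → ℝ) → ℝ} (hF : ContDiff ℝ ∞ F)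
    {f : ℝ → (Fin m → ℝ)} (hf : Tendsto f (𝓝 0) (𝓝 0)) {d : ℕ}
    (hfd : ∀ k, (fun t => f t k) =O[𝓝 0] fun t => t ^ d) :
    (fun t => F (f t) - (F 0 + ∑ k, f t k * partialDeriv k F 0)) =O[𝓝 0]
      fun t => t ^ (2 * d) := by
  obtain ⟨Q, hQ, hFQ⟩ := exists_eq_taylor_one_add_sum_mul_mul hF
  have remainder_eq (t : ℝ) : F (f t) - (F 0 + ∑ k, f t k * partialDeriv k F 0) =
      ∑ k, ∑ l, f t k * f t l * Q k l (f t) := by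
    rw [hFQ (f t), add_sub_cancel_left]
  simp only [remainder_eq]
  refine .fun_sum fun k _ => .fun_sum fun l _ => ?_
  have Q_isBigO : (fun t => Q k l (f t)) =O[𝓝 0] fun _ => (1 : ℝ) :=
    ((hQ k l).continuous.continuousAt.tendsto.comp hf).isBigO_one ℝ
  simpa only [mul_one, two_mul, pow_add] using ((hfd k).mul (hfd l)).mul Q_isBigO

lemma sum_mul_partialDeriv_monomialCurve_eq_zero {a : Fin m → ℕ} {F : (Fin m → ℝ) → ℝ}
    (hF : ContDiff ℝ ∞ F) (hFa : ∀ᶠ t in 𝓝 0, F (monomialCurve a t) = 0) :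
    ∀ᶠ t in 𝓝 0, ∑ i, a i * t ^ (a i - 1) * partialDeriv i F (monomialCurve a t) = 0 := by
  filter_upwards [hFa.eventually_nhds] with t ht
  have hasDerivAt_curve : HasDerivAt (monomialCurve a) (fun i => a i * t ^ (a i - 1)) t :=
    hasDerivAt_pi.2 fun i => hasDerivAt_pow (a i) t
  rw [← fderiv_apply_eq_sum_partialDeriv]
  have chain := (hF.differentiable (by simp)).differentiableAt.hasFDerivAt.comp_hasDerivAt t
    hasDerivAt_curve
  exact chain.unique ((hasDerivAt_const t (0 : ℝ)).congr_of_eventuallyEq ht)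

lemma isBigO_pow_pow_nhds_zero {d n : ℕ} (h : d ≤ n) :
    (fun t : ℝ => t ^ n) =O[𝓝 0] fun t => t ^ d := by
  have bounded : (fun t : ℝ => t ^ (n - d)) =O[𝓝 0] fun _ => (1 : ℝ) :=
    (continuous_pow (n - d)).continuousAt.tendsto.isBigO_one ℝ
  simpa only [mul_one, ← pow_add, Nat.add_sub_cancel' h] using
    (isBigO_refl (fun t : ℝ => t ^ d) (𝓝 0)).mul bounded

lemma isBigO_comp_monomialCurve {a : Fin m → ℕ} {F : (Fin m → ℝ) → ℝ} (hF : ContDiff ℝ ∞ F)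
    {d : ℕ} (hd : d ≠ 0) (hda : ∀ k, d ≤ a k) :
    (fun t => F (monomialCurve a t) - (F 0 + ∑ k, t ^ a k * partialDeriv k F 0)) =O[𝓝 0]
      fun t => t ^ (2 * d) :=
  isBigO_comp_sub_taylor_one hF
    (tendsto_monomialCurve fun k => (hd.bot_lt.trans_le (hda k)).ne')
    fun k => isBigO_pow_pow_nhds_zero (hda k)

lemma isBigO_sum_taylor_partialDeriv {a : Fin m → ℕ} {d : ℕ} (hd : d ≠ 0) (hda : ∀ k, d ≤ a k)
    {B : (Fin m → ℝ) → ℝ} (hB : ContDiff ℝ ∞ B)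
    (hBa : ∀ᶠ t in 𝓝 0, B (monomialCurve a t) = 0) :
    (fun t : ℝ => ∑ i, (a i * partialDeriv i B 0 * t ^ (a i - 1) +
      ∑ k, a i * partialDeriv k (partialDeriv i B) 0 * t ^ (a i - 1 + a k)))
      =O[𝓝 0] fun t => t ^ (d - 1 + 2 * d) := by
  have term_isBigO (i : Fin m) :
      (fun t => (a i : ℝ) * (t ^ (a i - 1) * (partialDeriv i B (monomialCurve a t) -
        (partialDeriv i B 0 + ∑ k, t ^ a k * partialDeriv k (partialDeriv i B) 0))))
      =O[𝓝 0] fun t => t ^ (d - 1 + 2 * d) := by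
    simp only [pow_add _ (d - 1)]
    exact ((isBigO_pow_pow_nhds_zero (Nat.sub_le_sub_right (hda i) 1)).mul
      (isBigO_comp_monomialCurve (contDiff_partialDeriv hB i) hd hda)).const_mul_left _
  refine (IsBigO.fun_sum (s := Finset.univ) fun i _ => term_isBigO i).neg_left.congr' ?_ .rfl
  filter_upwards [sum_mul_partialDeriv_monomialCurve_eq_zero hB hBa] with t ht
  rw [neg_eq_iff_add_eq_zero, ← ht, ← Finset.sum_add_distrib]
  refine Finset.sum_congr rfl fun i _ => ?_
  have sum_eq : ∑ k, a i * partialDeriv k (partialDeriv i B) 0 * t ^ (a i - 1 + a k) =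
      a i * t ^ (a i - 1) * ∑ k, t ^ a k * partialDeriv k (partialDeriv i B) 0 := by
    rw [Finset.mul_sum]
    exact Finset.sum_congr rfl fun k _ => by ring
  rw [sum_eq]
  ring

/-- Along the curve `∑ i, gᵢ' · ∂ᵢB` vanishes; compare coefficients of its expansion modulo
`t ^ 11`. -/
lemma hessian_relations {B : (Fin 4 → ℝ) → ℝ} (hB : ContDiff ℝ ∞ B)
    (hB0 : ∀ᶠ t in 𝓝 0, B (monomialCurve ![4, 5, 6, 7] t) = 0) {h : Fin 4 → Fin 4 → ℝ}
    (h_def : ∀ i k, partialDeriv k (partialDeriv i B) 0 = h i k) :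
    (∀ i, partialDeriv i B 0 = 0) ∧ h 0 0 = 0 ∧ h 0 1 = 0 ∧ 2 * h 0 2 + h 1 1 = 0 ∧
      h 0 3 + h 1 2 = 0 := by
  let a : Fin 4 → ℕ := ![4, 5, 6, 7]
  let p : ℝ[X] := ∑ i, (C (a i * partialDeriv i B 0) * X ^ (a i - 1) +
    ∑ k, C (a i * h i k) * X ^ (a i - 1 + a k))
  have coeff_eq_zero (n : ℕ) (hn : n < 11) : p.coeff n = 0 :=
    coeff_eq_zero_of_isBigO (by
      simpa [p, eval_finsetSum, h_def] using
        isBigO_sum_taylor_partialDeriv four_ne_zero four_le_exponent hB hB0) hn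
  simp only [p, finsetSum_coeff, coeff_add, coeff_C_mul_X_pow] at coeff_eq_zero
  have coeff_three : partialDeriv 0 B 0 = 0 := by
    simpa [a, Fin.sum_univ_four] using coeff_eq_zero 3
  have coeff_four : partialDeriv 1 B 0 = 0 := by
    simpa [a, Fin.sum_univ_four] using coeff_eq_zero 4
  have coeff_five : partialDeriv 2 B 0 = 0 := by
    simpa [a, Fin.sum_univ_four] using coeff_eq_zero 5
  have coeff_six : partialDeriv 3 B 0 = 0 := by
    simpa [a, Fin.sum_univ_four] using coeff_eq_zero 6
  have coeff_seven : h 0 0 = 0 := by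
    simpa [a, Fin.sum_univ_four] using coeff_eq_zero 7
  have coeff_eight : 4 * h 0 1 + 5 * h 1 0 = 0 := by
    simpa [a, Fin.sum_univ_four] using coeff_eq_zero 8
  have coeff_nine : 4 * h 0 2 + 5 * h 1 1 + 6 * h 2 0 = 0 := by
    simpa [a, Fin.sum_univ_four] using coeff_eq_zero 9
  have coeff_ten : 4 * h 0 3 + 5 * h 1 2 + 6 * h 2 1 + 7 * h 3 0 = 0 := by
    simpa [a, Fin.sum_univ_four] using coeff_eq_zero 10
  have h_symm (i k) : h k i = h i k := by rw [← h_def, ← h_def, partialDeriv_comm hB]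
  rw [h_symm 0 1] at coeff_eight
  rw [h_symm 0 2] at coeff_nine
  rw [h_symm 1 2, h_symm 0 3] at coeff_ten
  exact ⟨fun i => by fin_cases i <;> assumption, coeff_seven, by linarith, by linarith, by linarith⟩

lemma first_jet_of_comp_curve_eq {F : (Fin 4 → ℝ) → ℝ} (hF : ContDiff ℝ ∞ F) {x y : ℝ}
    (hFxy : ∀ᶠ t in 𝓝 0, F (monomialCurve ![4, 5, 6, 7] t) = x + t ^ 4 * y) :
    F 0 = x ∧ partialDeriv 0 F 0 = y ∧ partialDeriv 1 F 0 = 0 := by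
  let a : Fin 4 → ℕ := ![4, 5, 6, 7]
  let p : ℝ[X] := C x + C y * X ^ 4 - (C (F 0) + ∑ k, C (partialDeriv k F 0) * X ^ a k)
  have p_isBigO : (fun t => p.eval t) =O[𝓝 0] fun t => t ^ 8 := by
    refine (isBigO_comp_monomialCurve hF four_ne_zero four_le_exponent).congr' ?_ .rfl
    filter_upwards [hFxy] with t ht
    simp only [p, a, ht, eval_finsetSum, eval_add, eval_sub, eval_C_mul, eval_X_pow, eval_C]
    simp only [mul_comm]
  have coeff_eq_zero (n : ℕ) (hn : n < 8) : p.coeff n = 0 := coeff_eq_zero_of_isBigO p_isBigO hn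
  simp only [p, coeff_sub, finsetSum_coeff, coeff_add, coeff_C_mul_X_pow, coeff_C] at coeff_eq_zero
  have coeff_zero : x - F 0 = 0 := by
    simpa [a, Fin.sum_univ_four] using coeff_eq_zero 0
  have coeff_four : y - partialDeriv 0 F 0 = 0 := by
    simpa [a, Fin.sum_univ_four] using coeff_eq_zero 4
  have coeff_five : partialDeriv 1 F 0 = 0 := by
    simpa [a, Fin.sum_univ_four] using coeff_eq_zero 5
  exact ⟨(sub_eq_zero.1 coeff_zero).symm, (sub_eq_zero.1 coeff_four).symm, coeff_five⟩

lemma first_jet_of_partialDeriv_sub_eq {B : Fin 4 → (Fin 4 → ℝ) → ℝ}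
    (hB : ∀ i, ContDiff ℝ ∞ (B i))
    (hB0 : ∀ i, ∀ᶠ t in 𝓝 0, B i (monomialCurve ![4, 5, 6, 7] t) = 0) {i j : Fin 4} {x y : ℝ}
    (hxy : ∀ᶠ t in 𝓝 0, partialDeriv i (B j) (monomialCurve ![4, 5, 6, 7] t) -
      partialDeriv j (B i) (monomialCurve ![4, 5, 6, 7] t) = x + t ^ 4 * y) :
    x = 0 ∧
      partialDeriv 0 (partialDeriv i (B j)) 0 - partialDeriv 0 (partialDeriv j (B i)) 0 = y ∧
      partialDeriv 1 (partialDeriv i (B j)) 0 = partialDeriv 1 (partialDeriv j (B i)) 0 := by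
  have contDiff_ij := contDiff_partialDeriv (hB j) i
  have contDiff_ji := contDiff_partialDeriv (hB i) j
  have partialDeriv_sub (k : Fin 4) :
      partialDeriv k (fun x => partialDeriv i (B j) x - partialDeriv j (B i) x) 0 =
        partialDeriv k (partialDeriv i (B j)) 0 - partialDeriv k (partialDeriv j (B i)) 0 := by
    rw [partialDeriv, fderiv_fun_sub (contDiff_ij.differentiable (by simp)).differentiableAt
      (contDiff_ji.differentiable (by simp)).differentiableAt, sub_apply]
    rfl
  have partialDeriv_eq_zero (i j : Fin 4) : partialDeriv i (B j) 0 = 0 :=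
    (hessian_relations (hB j) (hB0 j) fun _ _ => rfl).1 i
  have first_jet := first_jet_of_comp_curve_eq (contDiff_ij.sub contDiff_ji) hxy
  rw [partialDeriv_sub, partialDeriv_sub, partialDeriv_eq_zero, partialDeriv_eq_zero, sub_zero,
    sub_eq_zero] at first_jet
  exact ⟨first_jet.1.symm, first_jet.2⟩

lemma sum_smul_algRestr_basis4567 (c : Fin 9 → ℝ) :
    ∑ k, c k • algRestr (monomialCurve ![4, 5, 6, 7]) (basis4567 k) =
      AlgRestr.mk (monomialCurve ![4, 5, 6, 7]) fun t u v =>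
        (c 0 + t ^ 4 * c 6) * (u 0 * v 1 - u 1 * v 0) +
        (c 1 + t ^ 4 * c 7) * (u 0 * v 2 - u 2 * v 0) + c 2 * (u 1 * v 2 - u 2 * v 1) +
        (c 3 + t ^ 4 * c 8) * (u 0 * v 3 - u 3 * v 0) + c 4 * (u 1 * v 3 - u 3 * v 1) +
        c 5 * (u 2 * v 3 - u 3 * v 2) := by
  simp only [funext_iff.1 algRestr_basis4567, Fin.sum_univ_castSucc (n := 8), Fin.sum_univ_eight,
    Matrix.cons_val, Fin.reduceCastSucc, Fin.reduceLast, monomialWedge, ← map_smul, ← map_add]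
  congr 1
  ext t u v
  simp only [Pi.add_apply, Pi.smul_apply, smul_eq_mul]
  ring

/-- A primitive `∑ Bᵢ dxᵢ` vanishing on the curve makes all `c k` vanish: `c 7` and `c 8` because
`hessian_relations` ties `∂₀∂₂B₀` and `∂₀∂₃B₀` to other second derivatives, which the coefficients
of `dx₁ ∧ dx₂` and `dx₁ ∧ dx₃` determine. -/
lemma linearIndependent_basis4567 :
    LinearIndependent ℝ fun k => algRestr (monomialCurve ![4, 5, 6, 7]) (basis4567 k) := by
  rw [Fintype.linearIndependent_iff]
  intro c hc
  rw [sum_smul_algRestr_basis4567, AlgRestr.mk_eq_zero_iff] at hc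
  obtain ⟨B, hB, hB0, hcB⟩ := exists_apply_single_eq_of_mem_exactAlong hc
  have first_jet (i j : Fin 4) (x y : ℝ) :=
    first_jet_of_partialDeriv_sub_eq hB hB0 (i := i) (j := j) (x := x) (y := y)
  have jet01 := first_jet 0 1 (c 0) (c 6) (hcB.mono fun t ht => by simp [← ht])
  have jet02 := first_jet 0 2 (c 1) (c 7) (hcB.mono fun t ht => by simp [← ht])
  have jet12 := first_jet 1 2 (c 2) 0 (hcB.mono fun t ht => by simp [← ht])
  have jet03 := first_jet 0 3 (c 3) (c 8) (hcB.mono fun t ht => by simp [← ht])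
  have jet13 := first_jet 1 3 (c 4) 0 (hcB.mono fun t ht => by simp [← ht])
  have jet23 := first_jet 2 3 (c 5) 0 (hcB.mono fun t ht => by simp [← ht])
  let h (l i k : Fin 4) : ℝ := partialDeriv k (partialDeriv i (B l)) 0
  have relations (l : Fin 4) := (hessian_relations (hB l) (hB0 l) (h := h l) fun _ _ => rfl).2
  have h_symm (l i k : Fin 4) : h l i k = h l k i := partialDeriv_comm (hB l) i k 0
  have c6 : c 6 = 0 := calc
    c 6 = h 1 0 0 - h 0 1 0 := jet01.2.1.symm
    _ = 0 := by rw [h_symm 0 1 0, (relations 1).1, (relations 0).2.1, sub_zero]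
  have c7 : c 7 = 0 := calc
    c 7 = h 2 0 0 - h 0 2 0 := jet02.2.1.symm
    _ = h 0 1 1 / 2 := by linarith [(relations 2).1, (relations 0).2.2.1, h_symm 0 2 0]
    _ = h 1 0 1 / 2 := congrArg (· / 2) jet01.2.2.symm
    _ = 0 := by rw [(relations 1).2.1, zero_div]
  have c8 : c 8 = 0 := calc
    c 8 = h 3 0 0 - h 0 3 0 := jet03.2.1.symm
    _ = h 0 2 1 := by
      linarith [(relations 3).1, (relations 0).2.2.2, h_symm 0 3 0, h_symm 0 1 2]
    _ = h 2 0 1 := jet02.2.2.symm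
    _ = 0 := (relations 2).2.1
  intro k
  fin_cases k
  exacts [jet01.1, jet02.1, jet12.1, jet03.1, jet13.1, jet23.1, c6, c7, c8]

end LinearIndependence

lemma isForm2_basis4567 (k : Fin 9) : IsForm2 4 (basis4567 k) := by
  fin_cases k <;> first | exact isForm2_wedge _ _ | exact isForm2_mwedge _ _ _

lemma zeroAR2_sub_sum_basis4567_iff {ω : Form2 4} (hω : IsForm2 4 ω) (c : Fin 9 → ℝ) :
    ZeroAR2 4 (fun x u v => ω x u v - ∑ k, c k * basis4567 k x u v)
        (monomialCurve ![4, 5, 6, 7]) ↔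
      algRestr (monomialCurve ![4, 5, 6, 7]) ω =
        ∑ k, c k • algRestr (monomialCurve ![4, 5, 6, 7]) (basis4567 k) := by
  rw [zeroAR2_iff_algRestr_eq_zero
      (tendsto_monomialCurve fun i => (four_pos.trans_le (four_le_exponent i)).ne')
      (hω.sub (.sum_mul isForm2_basis4567 c)),
    algRestr_sub_sum_mul, sub_eq_zero]

theorem algRestriction_basis_4567_general {ω : Form2 4} (hω : IsForm2 4 ω)
    (hdω : ∀ u v w, extD2 4 ω 0 u v w = 0) :
    ∃! c : Fin 9 → ℝ,
      ZeroAR2 4 (fun x u v => ω x u v - ∑ k, c k * basis4567 k x u v)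
        (fun t => ![t ^ 4, t ^ 5, t ^ 6, t ^ 7]) := by
  have curve_eq : (fun t : ℝ => ![t ^ 4, t ^ 5, t ^ 6, t ^ 7]) = monomialCurve ![4, 5, 6, 7] := by
    ext t i
    fin_cases i <;> rfl
  simp only [curve_eq, zeroAR2_sub_sum_basis4567_iff hω]
  obtain ⟨c, hc⟩ := exists_algRestr_eq_sum_basis4567 hω hdω
  refine ⟨c, hc, fun c' hc' => ?_⟩
  exact linearIndependent_basis4567.fintypeLinearCombination_injective (hc'.symm.trans hc)

/-- The algebraic restrictions to `g(t) = (t⁴,t⁵,t⁶,t⁷)` of the nine closed 2-forms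
`dx₁∧dx₂, dx₁∧dx₃, dx₂∧dx₃, dx₁∧dx₄, dx₂∧dx₄, dx₃∧dx₄, x₁dx₁∧dx₂, x₁dx₁∧dx₃,
x₁dx₁∧dx₄` form a basis of the space of algebraic restrictions of closed 2-forms. -/
theorem algRestriction_basis_4567
    (ω : Form2 4) (hω : IsForm2 4 ω) (hcl : Closed2 4 ω) :
    ∃! c : Fin 9 → ℝ,
      ZeroAR2 4 (fun x u v => ω x u v - ∑ k, c k * basis4567 k x u v)
        (fun t => ![t^4, t^5, t^6, t^7]) := by
  exact algRestriction_basis_4567_general hω hcl.self_of_nhds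
end
end
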